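/- arXiv:1612.03351 — 6 statements merged into one kernel-verified Lean document; each statement's English description precedes it below -/
import Mathlib

section
/- For all real numbers α, β with α ≠ 0 and every real y > 0, the integral ∫_{-∞}^{∞} β e^{ν} exp(−πy(α² e^{−2ν} + β² e^{2ν})) dν converges and equals (1/(2√y))·sgn(β)·exp(−2πy|αβ|), where sgn(0) = 0. -/
open Complex MeasureTheory
open scoped Classical

noncomputable section

/-- `e(a) = exp(2πia)`. -/
def e (a : ℂ) : ℂ := Complex.exp (2 * (Real.pi : ℂ) * Complex.I * a)

/-- The Fourier transform `F(g)(x) = ∫ g(w) e(wx) dw`. -/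
def fourierT (g : ℝ → ℂ) (x : ℝ) : ℂ := ∫ w : ℝ, g w * e ((w * x : ℝ))

/-- The operator `E_σ(f)(x) = e(x²σ/2) ∫_0^x e(-w²σ/2) f(w) dw`. -/
def Eop (σ : ℂ) (f : ℝ → ℂ) (x : ℝ) : ℂ :=
  e ((x : ℂ)^2 * σ / 2) * ∫ w in (0:ℝ)..x, e (-(w : ℂ)^2 * σ / 2) * f w

/-- `ω_τ(x) = e(-x²τ/2) ∑_{m ∈ ℤ+1/2, m ≥ |x|} e(m²τ/2 + m/2)`. -/
def omega (τ : ℂ) (x : ℝ) : ℂ :=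
  e (-(x : ℂ)^2 * τ / 2) *
    ∑' m : ℤ, if |x| ≤ (m : ℝ) + 1/2 then
      e (((m : ℂ) + 1/2)^2 / 2 * τ + ((m : ℂ) + 1/2) / 2) else 0

/-- `η³(τ) = -i ∑_{m ∈ ℤ+1/2} m e(m²τ/2 + m/2)`. -/
def eta3 (τ : ℂ) : ℂ :=
  -Complex.I * ∑' m : ℤ, ((m : ℂ) + 1/2) * e (((m : ℂ) + 1/2)^2 / 2 * τ + ((m : ℂ) + 1/2) / 2)

/-- The complementary error function. -/
def erfc (x : ℝ) : ℝ := (2 / Real.sqrt Real.pi) * ∫ t in Set.Ioi x, Real.exp (-t^2)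

/-- `g⁺_τ`. -/
def gplus (τ : ℂ) (x : ℝ) : ℂ :=
  e (-(x : ℂ)^2 * τ / 2) * ((Real.sign x : ℂ) / (Complex.I * eta3 τ)) *
    ∑' m : ℤ, if |x| < (m : ℝ) + 1/2 then
      (((m : ℝ) + 1/2 - |x| : ℝ) : ℂ) * e (((m : ℂ) + 1/2)^2 / 2 * τ + ((m : ℂ) + 1/2) / 2)
    else 0

/-- `g*_τ`. -/
def gstar (τ : ℂ) (x : ℝ) : ℂ :=
  e (-(x : ℂ)^2 * τ / 2) * ((Real.sign x : ℂ) / 2) *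
    (erfc (Real.sqrt (2 * Real.pi * τ.im) * |x|) : ℂ)

/-- `g_τ = g⁺_τ - g*_τ`. -/
def gfun (τ : ℂ) (x : ℝ) : ℂ := gplus τ x - gstar τ x

/-- The operator `ξ_k f = 2i v^k conj(∂f/∂τ̄)`, with `∂/∂τ̄ = (1/2)(∂/∂u + i ∂/∂v)`. -/
def xi (k : ℝ) (f : ℂ → ℂ) (τ : ℂ) : ℂ :=
  2 * Complex.I * ((τ.im ^ k : ℝ) : ℂ) *
    (starRingEnd ℂ) ((1/2 : ℂ) * (fderiv ℝ f τ 1 + Complex.I * fderiv ℝ f τ Complex.I))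

/-- Sum of divisors function `σ₁`. -/
def sigma1 (n : ℕ) : ℕ := ∑ d ∈ Nat.divisors n, d

/-- The weight 2 Eisenstein series `E₂`. -/
def E2 (τ : ℂ) : ℂ := 1 - 24 * ∑' n : ℕ, (sigma1 (n+1) : ℂ) * e ((n + 1 : ℂ) * τ)

/-- `ϑ̃_{N,h}`. -/
def tvtheta (N : ℕ) (h : ℝ) (τ : ℂ) : ℂ :=
  (if ∃ m : ℤ, h = (m : ℝ) + 1/2 then
      e ((h : ℂ) / 2) * E2 τ / (12 * (N : ℂ) * Complex.I * eta3 τ) else 0)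
  + ∑' n : ℤ, gfun τ ((N : ℝ) * n + h)

/-- The Schwartz function `φ_τ(x,y) = √(2v)·x·e(x²τ/2 - y²τ̄/2)`. -/
def Phi (τ : ℂ) (x y : ℝ) : ℂ :=
  (Real.sqrt (2 * τ.im) : ℂ) * (x : ℂ) *
    e ((x : ℂ)^2 * τ / 2 - (y : ℂ)^2 * (starRingEnd ℂ) τ / 2)

/-- The signature (1,1) bilinear form `B((a₁,a₂),(b₁,b₂)) = a₁b₂ + a₂b₁`. -/
def Bform (a b : ℝ × ℝ) : ℝ := a.1 * b.2 + a.2 * b.1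

/-- `Z⁺_t = (t/√2, t⁻¹/√2)`. -/
def Zp (t : ℝ) : ℝ × ℝ := (t / Real.sqrt 2, t⁻¹ / Real.sqrt 2)

/-- `Z⁻_t = (t/√2, -t⁻¹/√2)`. -/
def Zm (t : ℝ) : ℝ × ℝ := (t / Real.sqrt 2, -t⁻¹ / Real.sqrt 2)

end

theorem hecke_aux (a b y : ℝ) (ha : 0 < a) (hb : 0 < b) (hy : 0 < y) :
    MeasureTheory.Integrable (fun ν : ℝ =>
      b * Real.exp ν *
        Real.exp (-(Real.pi * y * (a^2 * Real.exp (-2*ν) + b^2 * Real.exp (2*ν))))) ∧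
    (∫ ν : ℝ, b * Real.exp ν *
        Real.exp (-(Real.pi * y * (a^2 * Real.exp (-2*ν) + b^2 * Real.exp (2*ν))))) =
      (1 / (2 * Real.sqrt y)) * Real.exp (-(2 * Real.pi * y * (a * b))) := by
  have hpy : 0 < Real.pi * y := mul_pos Real.pi_pos hy
  set F : ℝ → ℝ := fun ν : ℝ => b * Real.exp ν *
        Real.exp (-(Real.pi * y * (a^2 * Real.exp (-2*ν) + b^2 * Real.exp (2*ν)))) with hF
  set G : ℝ → ℝ := fun ν : ℝ => a * Real.exp (-ν) *
        Real.exp (-(Real.pi * y * (a^2 * Real.exp (-2*ν) + b^2 * Real.exp (2*ν)))) with hG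
  set ψ : ℝ → ℝ := fun ν => b * Real.exp ν - a * Real.exp (-ν) with hψ
  have hder : ∀ x ∈ (Set.univ : Set ℝ),
      HasDerivWithinAt ψ (b * Real.exp x + a * Real.exp (-x)) Set.univ x := by
    intro x _
    have h1 := (Real.hasDerivAt_exp x).const_mul b
    have h2 := ((hasDerivAt_neg x).exp).const_mul a
    have h3 := h1.sub h2
    refine HasDerivAt.hasDerivWithinAt ?_
    convert h3 using 1
    · rfl
    · ring
  have hmono : StrictMono ψ := by
    intro x z hxz
    have h1 : Real.exp x < Real.exp z := Real.exp_lt_exp.2 hxz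
    have h2 : Real.exp (-z) < Real.exp (-x) := Real.exp_lt_exp.2 (by linarith)
    have h3 := mul_lt_mul_of_pos_left h1 hb
    have h4 := mul_lt_mul_of_pos_left h2 ha
    simp only [hψ]
    linarith
  have hsurj : Function.Surjective ψ := by
    intro u
    have hab : 0 < a * b := mul_pos ha hb
    have hD : 0 ≤ u^2 + 4 * (a*b) := by positivity
    have hs := Real.sq_sqrt hD
    set s := Real.sqrt (u^2 + 4 * (a*b)) with hsd
    have hs0 : 0 ≤ s := Real.sqrt_nonneg _
    have hpos : 0 < u + s := by
      by_contra hn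
      nlinarith
    have ht : 0 < (u + s) / (2*b) := by positivity
    refine ⟨Real.log ((u + s) / (2*b)), ?_⟩
    simp only [hψ]
    rw [Real.exp_neg, Real.exp_log ht]
    have : u + s ≠ 0 := hpos.ne'
    field_simp
    nlinarith
  have himg : ψ '' Set.univ = Set.univ := by
    rw [Set.image_univ]; exact hsurj.range_eq
  have key : ∀ ν, F ν + G ν = Real.exp (-(2 * Real.pi * y * (a * b))) *
      (|b * Real.exp ν + a * Real.exp (-ν)| • Real.exp (-(Real.pi * y) * (ψ ν)^2)) := by
    intro ν
    have hp : 0 < b * Real.exp ν + a * Real.exp (-ν) := by positivity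
    rw [abs_of_pos hp, smul_eq_mul]
    have h1 : Real.exp (-(Real.pi * y * (a^2 * Real.exp (-2*ν) + b^2 * Real.exp (2*ν)))) =
        Real.exp (-(2 * Real.pi * y * (a * b))) * Real.exp (-(Real.pi * y) * (ψ ν)^2) := by
      rw [← Real.exp_add]
      congr 1
      have e1 : Real.exp (-2*ν) = Real.exp (-ν) ^ 2 := by
        rw [← Real.exp_nat_mul]; congr 1; push_cast; ring
      have e2 : Real.exp (2*ν) = Real.exp ν ^ 2 := by
        rw [← Real.exp_nat_mul]; congr 1
      have e3 : Real.exp ν * Real.exp (-ν) = 1 := by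
        rw [← Real.exp_add]; simp
      rw [e1, e2]
      simp only [hψ]
      linear_combination (-2 * Real.pi * y * a * b) * e3
    simp only [hF, hG]
    rw [h1]
    ring
  have hI0 : Integrable (fun ν => |b * Real.exp ν + a * Real.exp (-ν)| •
      Real.exp (-(Real.pi * y) * (ψ ν)^2)) := by
    have := (integrableOn_image_iff_integrableOn_abs_deriv_smul MeasurableSet.univ hder
      hmono.injective.injOn (fun u => Real.exp (-(Real.pi * y) * u^2))).1
      (by rw [himg]; exact (integrable_exp_neg_mul_sq hpy).integrableOn)
    exact integrableOn_univ.1 this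
  have hV0 : ∫ ν, |b * Real.exp ν + a * Real.exp (-ν)| •
      Real.exp (-(Real.pi * y) * (ψ ν)^2) = 1 / Real.sqrt y := by
    have := integral_image_eq_integral_abs_deriv_smul MeasurableSet.univ hder
      hmono.injective.injOn (fun u => Real.exp (-(Real.pi * y) * u^2))
    rw [himg, setIntegral_univ, setIntegral_univ, integral_gaussian] at this
    rw [← this, ← div_div, div_self Real.pi_pos.ne', Real.sqrt_div zero_le_one, Real.sqrt_one]
  have hI : Integrable (fun ν => F ν + G ν) := by
    simp_rw [key]; exact hI0.const_mul _
  have hV : ∫ ν, (F ν + G ν) = Real.exp (-(2 * Real.pi * y * (a * b))) * (1 / Real.sqrt y) := by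
    simp_rw [key]; rw [integral_const_mul, hV0]
  have hF0 : ∀ ν, 0 ≤ F ν := fun ν => by simp only [hF]; positivity
  have hG0 : ∀ ν, 0 ≤ G ν := fun ν => by simp only [hG]; positivity
  have hIF : Integrable F := by
    refine hI.mono' ?_ (Filter.Eventually.of_forall fun ν => ?_)
    · apply Continuous.aestronglyMeasurable
      simp only [hF]; fun_prop
    · rw [Real.norm_of_nonneg (hF0 ν)]; linarith [hG0 ν]
  have hIG : Integrable G := by
    refine hI.mono' ?_ (Filter.Eventually.of_forall fun ν => ?_)
    · apply Continuous.aestronglyMeasurable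
      simp only [hG]; fun_prop
    · rw [Real.norm_of_nonneg (hG0 ν)]; linarith [hF0 ν]
  have hFG : ∫ ν, F ν = ∫ ν, G ν := by
    rw [← integral_sub_left_eq_self F volume (Real.log (a / b))]
    congr 1
    ext ν
    have hl : Real.exp (Real.log (a/b)) = a / b := Real.exp_log (by positivity)
    have e1 : Real.exp (Real.log (a/b) - ν) = a / b * Real.exp (-ν) := by
      rw [sub_eq_add_neg, Real.exp_add, hl]
    have e2 : Real.exp (2 * (Real.log (a/b) - ν)) = (a / b)^2 * Real.exp (-2*ν) := by
      rw [← hl, ← Real.exp_nat_mul, ← Real.exp_add, hl]; congr 1; push_cast; ring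
    have e3 : Real.exp (-2 * (Real.log (a/b) - ν)) = (b / a)^2 * Real.exp (2*ν) := by
      have : b / a = Real.exp (-Real.log (a/b)) := by rw [Real.exp_neg, hl, inv_div]
      rw [this, ← Real.exp_nat_mul, ← Real.exp_add]; congr 1; push_cast; ring
    simp only [hF, hG]
    rw [e1, e2, e3]
    have h1 : b * (a / b * Real.exp (-ν)) = a * Real.exp (-ν) := by field_simp
    have h2 : a^2 * ((b / a)^2 * Real.exp (2*ν)) + b^2 * ((a / b)^2 * Real.exp (-2*ν)) =
      a^2 * Real.exp (-2*ν) + b^2 * Real.exp (2*ν) := by field_simp; ring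
    rw [h1, h2]
  refine ⟨hIF, ?_⟩
  rw [integral_add hIF hIG, ← hFG] at hV
  rw [← div_div, mul_comm (1 / 2 / _)]
  have : (1:ℝ) / 2 / Real.sqrt y = (1 / Real.sqrt y) / 2 := by ring
  rw [this]
  linarith

/-- Hecke's unfolding integral identity. -/
theorem integral_identity (α β y : ℝ) (hα : α ≠ 0) (hy : 0 < y) :
    MeasureTheory.Integrable (fun ν : ℝ =>
      β * Real.exp ν *
        Real.exp (-(Real.pi * y * (α^2 * Real.exp (-2*ν) + β^2 * Real.exp (2*ν))))) ∧
    (∫ ν : ℝ, β * Real.exp ν *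
        Real.exp (-(Real.pi * y * (α^2 * Real.exp (-2*ν) + β^2 * Real.exp (2*ν))))) =
      (1 / (2 * Real.sqrt y)) * Real.sign β * Real.exp (-(2 * Real.pi * y * |α * β|)) := by
  rcases lt_trichotomy β 0 with hb | hb | hb
  · obtain ⟨h1, h2⟩ := hecke_aux |α| (-β) y (abs_pos.2 hα) (by linarith) hy
    simp only [sq_abs, neg_sq, neg_mul β] at h1 h2
    simp only [neg_mul (β * _), neg_mul β] at h1 h2
    rw [integral_neg] at h2
    refine ⟨by simpa using h1.neg, ?_⟩
    rw [Real.sign_of_neg hb, abs_mul, abs_of_neg hb]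
    linarith
  · subst hb; simp
  · obtain ⟨h1, h2⟩ := hecke_aux |α| β y (abs_pos.2 hα) hb hy
    simp only [sq_abs] at h1 h2
    refine ⟨h1, ?_⟩
    rw [Real.sign_of_pos hb, abs_mul, abs_of_pos hb, h2]
    ring
end

section
/- For every τ in the complex upper half plane H and all real x, y, one has φ_{−1/τ}(x, y) = −τ · ∫_{-∞}^{∞} ∫_{-∞}^{∞} φ_τ(w, r) e(xw − yr) dw dr, where φ_τ(x,y) := √(2 Im τ) · x · e(x²τ/2 − y² conj(τ)/2). -/
open Complex MeasureTheory
open scoped Classical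

theorem aux_int (b c : ℂ) (hb : b.re < 0) :
    Integrable (fun w : ℝ => (w : ℂ) * Complex.exp (b * w ^ 2 + c * w)) := by
  have h1 := (integrable_cexp_quadratic' hb (c + 1) 0).norm
  have h2 := (integrable_cexp_quadratic' hb (c - 1) 0).norm
  refine (h1.add h2).mono' (by fun_prop) (Filter.Eventually.of_forall fun w => ?_)
  have e1 : b * (w : ℂ) ^ 2 + (c + 1) * w + 0 = (b * w ^ 2 + c * w) + (w : ℂ) := by ring
  have e2 : b * (w : ℂ) ^ 2 + (c - 1) * w + 0 = (b * w ^ 2 + c * w) + ((-w : ℝ) : ℂ) := by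
    push_cast; ring
  simp only [Pi.add_apply]
  rw [e1, e2, Complex.exp_add _ (w : ℂ), Complex.exp_add _ ((-w : ℝ) : ℂ), norm_mul, norm_mul, norm_mul,
    Complex.norm_exp_ofReal, Complex.norm_exp_ofReal, ← mul_add, mul_comm, Complex.norm_real]
  refine mul_le_mul_of_nonneg_left ?_ (norm_nonneg _)
  rw [Real.norm_eq_abs, abs_le]
  have a1 := Real.add_one_le_exp w
  have a2 := Real.add_one_le_exp (-w)
  have a3 := Real.exp_pos w
  have a4 := Real.exp_pos (-w)
  constructor <;> linarith

theorem aux_moment (b c : ℂ) (hb : b.re < 0) :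
    ∫ w : ℝ, (w : ℂ) * Complex.exp (b * w ^ 2 + c * w) =
      -(c / (2 * b)) * ((Real.pi / -b) ^ (1 / 2 : ℂ) * Complex.exp (- c ^ 2 / (4 * b))) := by
  have hb0 : b ≠ 0 := by rintro rfl; simp at hb
  have i1 := aux_int b c hb
  have i0 : Integrable (fun w : ℝ => Complex.exp (b * w ^ 2 + c * w)) := by
    simpa using integrable_cexp_quadratic' hb c 0
  have q : ∫ w : ℝ, Complex.exp (b * w ^ 2 + c * w) =
      (Real.pi / -b) ^ (1 / 2 : ℂ) * Complex.exp (- c ^ 2 / (4 * b)) := by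
    have := integral_cexp_quadratic hb c 0
    simpa [neg_div] using this
  have hd : ∀ w : ℝ, HasDerivAt (fun w : ℝ => Complex.exp (b * w ^ 2 + c * w))
      (2 * b * ((w : ℂ) * Complex.exp (b * w ^ 2 + c * w))
        + c * Complex.exp (b * w ^ 2 + c * w)) w := by
    intro w
    have h : HasDerivAt (fun z : ℂ => Complex.exp (b * z ^ 2 + c * z))
      (Complex.exp (b * w ^ 2 + c * w) * (b * (2 * w) + c * 1)) (w : ℂ) := by
      refine HasDerivAt.cexp (HasDerivAt.add (HasDerivAt.const_mul b ?_)
        ((hasDerivAt_id _).const_mul c))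
      simpa using hasDerivAt_pow 2 (w : ℂ)
    convert! h.comp_ofReal using 1
    ring
  have z := integral_eq_zero_of_hasDerivAt_of_integrable hd
    ((i1.const_mul _).add (i0.const_mul _)) i0
  rw [integral_add (i1.const_mul _) (i0.const_mul _), integral_const_mul, integral_const_mul, q] at z
  rw [show ∀ A B : ℂ, (A = -(c / (2 * b)) * B) ↔ 2 * b * A + c * B = 0 from ?_]
  · exact z
  · intro A B
    constructor
    · rintro rfl; field_simp; ring
    · intro h; field_simp; linear_combination h

theorem aux_norm (z : ℂ) (hz : 0 < z.re) :
    z ^ (1 / 2 : ℂ) * ((starRingEnd ℂ) z) ^ (1 / 2 : ℂ) = (‖z‖ : ℂ) := by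
  have harg : z.arg ≠ Real.pi := by
    intro h
    rw [Complex.arg_eq_pi_iff] at h
    linarith [h.1]
  have h := Complex.cpow_conj z (1 / 2 : ℂ) harg
  have hc : (starRingEnd ℂ) (1 / 2 : ℂ) = 1 / 2 := by
    rw [map_div₀, map_one, Complex.conj_ofNat]
  rw [hc] at h
  rw [h, mul_comm, Complex.mul_conj, Complex.normSq_eq_norm_sq, ← norm_pow, ← Complex.cpow_nat_mul]
  norm_num [Complex.norm_conj]

/-- transformation of `φ_τ` under the signature (1,1) Fourier transform. -/
theorem phi_fourier_transform (τ : ℂ) (hτ : 0 < τ.im) (x y : ℝ) :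
    Phi (-1/τ) x y = -τ * ∫ w : ℝ, ∫ r : ℝ, Phi τ w r * e ((x*w - y*r : ℝ)) := by
  have ht : τ ≠ 0 := by rintro rfl; simp at hτ
  have hs : (starRingEnd ℂ) τ ≠ 0 := by simpa using ht
  have hpi : (Real.pi : ℂ) ≠ 0 := by exact_mod_cast Real.pi_ne_zero
  have hb1 : ((Real.pi : ℂ) * I * τ).re < 0 := by
    simp; positivity
  have hb2 : (-((Real.pi : ℂ) * I * (starRingEnd ℂ) τ)).re < 0 := by
    simp; positivity
  have hin : ∀ w r : ℝ, Phi τ w r * e ((x*w - y*r : ℝ)) =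
      ((Real.sqrt (2 * τ.im) : ℂ) * ((w : ℂ) *
        Complex.exp ((Real.pi * I * τ) * w ^ 2 + (2 * Real.pi * I * x) * w))) *
      Complex.exp (-(Real.pi * I * (starRingEnd ℂ) τ) * r ^ 2 + (-(2 * Real.pi * I * y)) * r + 0) := by
    intro w r
    unfold Phi e
    rw [mul_assoc, ← Complex.exp_add]
    have h2 : ∀ A B C D : ℂ, (A * (B * Complex.exp C)) * Complex.exp D =
        A * B * Complex.exp (C + D) := by
      intro A B C D
      rw [Complex.exp_add]; ring
    rw [h2]
    congr 2
    push_cast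
    ring
  simp_rw [hin, integral_const_mul, integral_cexp_quadratic hb2, integral_mul_const,
    integral_const_mul, aux_moment _ _ hb1]
  have hz : 0 < (I / τ).re := by
    rw [Complex.div_re]; simp
    have := Complex.normSq_pos.mpr ht
    positivity
  have hn := aux_norm _ hz
  have c1 : (Real.pi : ℂ) / -(Real.pi * I * τ) = I / τ := by
    field_simp; simp
  have c2 : (Real.pi : ℂ) / - -(Real.pi * I * (starRingEnd ℂ) τ) = (starRingEnd ℂ) (I / τ) := by
    simp only [map_div₀, Complex.conj_I]
    field_simp; simp
  have c3 : 2 * (Real.pi : ℂ) * I * x / (2 * (Real.pi * I * τ)) = x / τ := by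
    field_simp
  have c4 : Real.sqrt (2 * (-1 / τ).im) = Real.sqrt (2 * τ.im) * ‖I / τ‖ := by
    rw [norm_div, Complex.norm_I, Complex.div_im]
    rw [← Real.sqrt_sq (show 0 ≤ 1 / ‖τ‖ by positivity), ← Real.sqrt_mul (by positivity)]
    congr 1
    rw [Complex.normSq_eq_norm_sq]
    simp
    field_simp
  rw [c1, c2, c3]
  unfold Phi e
  rw [c4]
  push_cast
  rw [← hn]
  have c5 : 2 * (Real.pi : ℂ) * I * ((x : ℂ) ^ 2 * (-1 / τ) / 2 -
      (y : ℂ) ^ 2 * (starRingEnd ℂ) (-1 / τ) / 2) =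
      (-(2 * (Real.pi : ℂ) * I * x) ^ 2 / (4 * (Real.pi * I * τ))) +
      (0 - (-(2 * (Real.pi : ℂ) * I * y)) ^ 2 / (4 * -(Real.pi * I * (starRingEnd ℂ) τ))) := by
    simp only [map_div₀, map_neg, map_one]
    field_simp
    ring
  rw [c5, Complex.exp_add]
  field_simp
end

section
/- Let X = (x₁, x₂) ∈ ℝ², t > 0 and τ = u + iv ∈ H. Set Z⁺_t := (t/√2, t^{-1}/√2), Z⁻_t := (t/√2, −t^{-1}/√2), and B((a₁,a₂),(b₁,b₂)) := a₁b₂ + a₂b₁. Then 2 ξ₁[τ ↦ φ_τ(B(X, Z⁺_t), B(X, Z⁻_t))] = t · (∂/∂t)[φ_τ(B(X, Z⁻_t), B(X, Z⁺_t))], where φ_τ(x,y) := √(2v) · x · e(x²τ/2 − y² conj(τ)/2). -/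
open Complex MeasureTheory
open scoped Classical

lemma xi_phi_aux_fderiv (p m : ℝ) (τ : ℂ) (hτ : 0 < τ.im) (d : ℂ) :
    fderiv ℝ (fun σ => Phi σ p m) τ d =
      ((Real.sqrt (2 * τ.im) : ℝ) : ℂ) * p *
        e ((p : ℂ)^2 * τ / 2 - (m : ℂ)^2 * (starRingEnd ℂ) τ / 2) *
        ((d.im : ℂ) / (2 * τ.im) + 2 * (Real.pi : ℂ) * Complex.I *
          ((p : ℂ)^2 * d / 2 - (m : ℂ)^2 * (starRingEnd ℂ) d / 2)) := by
  have him : HasFDerivAt (fun σ : ℂ => 2 * σ.im) ((2:ℝ) • Complex.imCLM) τ :=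
    (Complex.imCLM.hasFDerivAt (x := τ)).const_mul 2
  have hs := him.sqrt (by positivity)
  have hs2 : HasFDerivAt (fun σ : ℂ => ((Real.sqrt (2 * σ.im) : ℝ) : ℂ)) _ τ :=
    (Complex.ofRealCLM.hasFDerivAt).comp τ hs
  have hid : HasFDerivAt (fun σ : ℂ => σ) (ContinuousLinearMap.id ℝ ℂ) τ := hasFDerivAt_id τ
  have hcj : HasFDerivAt (fun σ : ℂ => (starRingEnd ℂ) σ) (Complex.conjCLE : ℂ →L[ℝ] ℂ) τ :=
    (Complex.conjCLE : ℂ →L[ℝ] ℂ).hasFDerivAt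
  have hE : HasFDerivAt (fun σ : ℂ => 2 * (Real.pi : ℂ) * Complex.I *
      ((p : ℂ)^2 / 2 * σ - (m : ℂ)^2 / 2 * (starRingEnd ℂ) σ)) _ τ :=
    ((hid.const_mul ((p:ℂ)^2/2)).sub (hcj.const_mul ((m:ℂ)^2/2))).const_mul
      (2 * (Real.pi : ℂ) * Complex.I)
  have h := (hs2.mul_const (p:ℂ)).mul hE.cexp
  have hf : (fun σ => Phi σ p m) = fun σ : ℂ => ((Real.sqrt (2 * σ.im) : ℝ) : ℂ) * p *
      Complex.exp (2 * (Real.pi : ℂ) * Complex.I *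
      ((p : ℂ)^2 / 2 * σ - (m : ℂ)^2 / 2 * (starRingEnd ℂ) σ)) := by
    funext σ
    unfold Phi e
    congr 2
    ring
  have hv : ((τ.im : ℝ) : ℂ) ≠ 0 := by exact_mod_cast hτ.ne'
  have hr0 : ((Real.sqrt (2 * τ.im) : ℝ) : ℂ) ≠ 0 := by
    exact_mod_cast (Real.sqrt_pos.2 (by positivity)).ne'
  have hr : ((Real.sqrt (2 * τ.im) : ℝ) : ℂ) ^ 2 = 2 * τ.im := by
    exact_mod_cast Real.sq_sqrt (by positivity)
  have he : e ((p : ℂ)^2 * τ / 2 - (m : ℂ)^2 * (starRingEnd ℂ) τ / 2) =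
      Complex.exp (2 * (Real.pi : ℂ) * Complex.I *
      ((p : ℂ)^2 / 2 * τ - (m : ℂ)^2 / 2 * (starRingEnd ℂ) τ)) := by
    unfold e; congr 1; ring
  have hfd := HasFDerivAt.fderiv (f := fun σ : ℂ => ((Real.sqrt (2 * σ.im) : ℝ) : ℂ) * p *
      Complex.exp (2 * (Real.pi : ℂ) * Complex.I *
      ((p : ℂ)^2 / 2 * σ - (m : ℂ)^2 / 2 * (starRingEnd ℂ) σ))) h
  rw [hf, hfd, he, ← hr]
  clear hfd h hE hs2 hs hf he hr
  generalize Real.sqrt (2 * τ.im) = r at *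
  simp
  field_simp
  ring

/-- intertwining of `ξ₁` and `t ∂/∂t` on the theta kernel. -/
theorem xi_phi_eq_t_deriv (x₁ x₂ : ℝ) (t : ℝ) (ht : 0 < t) (τ : ℂ) (hτ : 0 < τ.im) :
    2 * xi 1 (fun σ => Phi σ (Bform (x₁, x₂) (Zp t)) (Bform (x₁, x₂) (Zm t))) τ =
      t * deriv (fun s : ℝ => Phi τ (Bform (x₁, x₂) (Zm s)) (Bform (x₁, x₂) (Zp s))) t := by
  have hinv := hasDerivAt_inv ht.ne'
  have hp : HasDerivAt (fun s : ℝ => Bform (x₁, x₂) (Zp s)) (Bform (x₁, x₂) (Zm t) / t) t := by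
    unfold Bform Zp Zm
    refine HasDerivAt.congr_deriv (((hinv.div_const (Real.sqrt 2)).const_mul x₁).add
      (((hasDerivAt_id t).div_const (Real.sqrt 2)).const_mul x₂)) ?_
    field_simp
  have hm : HasDerivAt (fun s : ℝ => Bform (x₁, x₂) (Zm s)) (Bform (x₁, x₂) (Zp t) / t) t := by
    unfold Bform Zp Zm
    refine HasDerivAt.congr_deriv (((hinv.neg.div_const (Real.sqrt 2)).const_mul x₁).add
      (((hasDerivAt_id t).div_const (Real.sqrt 2)).const_mul x₂)) ?_
    field_simp
  unfold xi
  rw [xi_phi_aux_fderiv _ _ _ hτ, xi_phi_aux_fderiv _ _ _ hτ]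
  generalize hP : (fun s : ℝ => Bform (x₁, x₂) (Zp s)) = P at *
  generalize hM : (fun s : ℝ => Bform (x₁, x₂) (Zm s)) = M at *
  have hP' : ∀ s, Bform (x₁, x₂) (Zp s) = P s := fun s => by rw [← hP]
  have hM' : ∀ s, Bform (x₁, x₂) (Zm s) = M s := fun s => by rw [← hM]
  simp only [hP', hM'] at *
  have hpc := hp.ofReal_comp
  have hmc := hm.ofReal_comp
  have hE := ((((hmc.pow 2).mul_const τ).div_const 2).sub
    (((hpc.pow 2).mul_const ((starRingEnd ℂ) τ)).div_const 2)).const_mul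
      (2 * (Real.pi : ℂ) * Complex.I)
  have h := (hmc.const_mul ((Real.sqrt (2 * τ.im) : ℝ) : ℂ)).mul hE.cexp
  have hd : deriv (fun s : ℝ => Phi τ (M s) (P s)) t = _ := HasDerivAt.deriv h
  rw [hd]
  have hc : (starRingEnd ℂ) (e ((P t : ℂ)^2 * τ / 2 - (M t : ℂ)^2 * (starRingEnd ℂ) τ / 2)) =
      Complex.exp (2 * (Real.pi : ℂ) * Complex.I *
      ((M t : ℂ)^2 * τ / 2 - (P t : ℂ)^2 * (starRingEnd ℂ) τ / 2)) := by
    unfold e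
    rw [← Complex.exp_conj]
    congr 1
    simp [Complex.conj_ofNat]
    ring
  have hv : ((τ.im : ℝ) : ℂ) ≠ 0 := by exact_mod_cast hτ.ne'
  have htc : ((t : ℝ) : ℂ) ≠ 0 := by exact_mod_cast ht.ne'
  have hsub : (starRingEnd ℂ) τ = τ - 2 * τ.im * Complex.I := by
    apply Complex.ext <;> simp
    ring
  simp only [map_mul, map_add, map_sub, map_div₀, hc, Real.rpow_one, Complex.conj_ofReal,
    Complex.conj_I, map_one, map_pow, map_ofNat, Complex.one_im, Complex.I_im, Complex.ofReal_zero,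
    Complex.ofReal_one, Complex.ofReal_div, Pi.pow_apply, map_zero, map_neg]
  generalize hX : Complex.exp (2 * (Real.pi : ℂ) * Complex.I *
      ((M t : ℂ)^2 * τ / 2 - (P t : ℂ)^2 * (starRingEnd ℂ) τ / 2)) = X
  rw [hsub]
  field_simp
  ring_nf
  simp only [Complex.I_sq, Complex.I_pow_four, show Complex.I ^ 3 = -Complex.I from Complex.I_pow_three]
  ring
end

section
/- For every Schwartz function φ on ℝ, ∑_{m ∈ ℤ+1/2} F(φ)(m) e(m/2) = i · ∑_{m ∈ ℤ+1/2} φ(m) e(m/2), where F(φ)(x) := ∫_ℝ φ(w) e(wx) dw; that is, the shifted Dirac comb C⁺(φ) := ∑_{m ∈ ℤ+1/2} φ(m) e(m/2) satisfies F(C⁺) = i·C⁺ as a tempered distribution. -/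
open Complex MeasureTheory
open scoped Classical

lemma norm_e_real (x : ℝ) : ‖e (x : ℂ)‖ = 1 := by
  unfold e
  rw [show 2 * (Real.pi : ℂ) * Complex.I * (x : ℂ) = ((2 * Real.pi * x : ℝ) : ℂ) * Complex.I by
    push_cast; ring]
  exact Complex.norm_exp_ofReal_mul_I _

lemma e_add (a b : ℂ) : e (a + b) = e a * e b := by
  unfold e
  rw [← Complex.exp_add]
  congr 1
  ring

lemma e_int (n : ℤ) : e (n : ℂ) = 1 := by
  unfold e
  rw [Complex.exp_eq_one_iff]
  exact ⟨n, by ring⟩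

lemma e_quarter : e (1/4 : ℂ) = Complex.I := by
  unfold e
  rw [show 2 * (Real.pi : ℂ) * Complex.I * (1/4) = (Real.pi : ℂ) / 2 * Complex.I by ring]
  exact Complex.exp_pi_div_two_mul_I

lemma fourier_twist (g : ℝ → ℂ) (x : ℝ) :
    FourierTransform.fourier (fun w : ℝ => g w * e ((w / 2 : ℝ) : ℂ)) x
      = fourierT g (1/2 - x) := by
  rw [Real.fourier_eq', fourierT]
  congr 1
  ext w
  rw [smul_eq_mul, mul_comm, mul_assoc]
  congr 1
  unfold e
  rw [← Complex.exp_add]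
  congr 1
  simp only [RCLike.inner_apply, conj_trivial]
  push_cast
  ring

lemma fourierT_eq (g : ℝ → ℂ) (x : ℝ) :
    fourierT g x = FourierTransform.fourier g (-x) := by
  rw [Real.fourier_eq', fourierT]
  congr 1
  ext w
  rw [smul_eq_mul, mul_comm]
  congr 1
  unfold e
  congr 1
  simp only [RCLike.inner_apply, conj_trivial]
  push_cast
  ring

/-- the shifted Dirac comb satisfies `F(C⁺) = i·C⁺`. -/
theorem shifted_comb_fourier (φ : SchwartzMap ℝ ℂ) :
    ∑' m : ℤ, fourierT (φ : ℝ → ℂ) ((m : ℝ) + 1/2) * e (((((m : ℝ) + 1/2)/2 : ℝ) : ℂ)) =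
      Complex.I * ∑' m : ℤ, φ ((m : ℝ) + 1/2) * e (((((m : ℝ) + 1/2)/2 : ℝ) : ℂ)) := by
  have hc : Continuous (fun w : ℝ => φ w * e ((w / 2 : ℝ) : ℂ)) := by
    unfold e
    have := φ.continuous
    fun_prop
  have hd : (fun w : ℝ => φ w * e ((w / 2 : ℝ) : ℂ)) =O[Filter.cocompact ℝ]
      fun x : ℝ => |x| ^ (-2 : ℝ) := by
    refine Asymptotics.IsBigO.trans ?_ (φ.isBigO_cocompact_rpow (-2))
    refine Asymptotics.isBigO_of_le _ (fun w => le_of_eq ?_)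
    rw [norm_mul, norm_e_real, mul_one]
  have hF : (FourierTransform.fourier (fun w : ℝ => φ w * e ((w / 2 : ℝ) : ℂ)))
      =O[Filter.cocompact ℝ] fun x : ℝ => |x| ^ (-2 : ℝ) := by
    have h1 := (SchwartzMap.compSubConstCLM ℂ (1/2 : ℝ)
      (FourierTransform.fourier φ)).isBigO_cocompact_rpow (-2)
    refine h1.congr_left (fun x => ?_)
    rw [fourier_twist, fourierT_eq, neg_sub]
    rfl
  have key := Real.tsum_eq_tsum_fourier_of_rpow_decay hc one_lt_two hd hF (1/2)
  have e1 : ∑' m : ℤ, φ ((m : ℝ) + 1/2) * e (((((m : ℝ) + 1/2)/2 : ℝ) : ℂ))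
      = ∑' n : ℤ, (fun w : ℝ => φ w * e ((w / 2 : ℝ) : ℂ)) (1/2 + n) := by
    refine tsum_congr fun m => ?_
    simp only [add_comm]
  rw [e1, key, ← tsum_mul_left, ← (Equiv.neg ℤ).tsum_eq]
  refine tsum_congr fun n => ?_
  rw [fourier_twist, fourier_coe_apply]
  have h2 : e ((((((Equiv.neg ℤ n : ℤ) : ℝ) + 1/2)/2 : ℝ) : ℂ))
      = Complex.I * Complex.exp (2 * Real.pi * Complex.I * n * (1/2 : ℝ) / (1 : ℝ)) := by
    have h3 : Complex.exp (2 * Real.pi * Complex.I * n * (1/2 : ℝ) / (1 : ℝ)) = e ((n : ℂ)/2) := by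
      unfold e
      congr 1
      push_cast
      ring
    rw [h3, ← e_quarter, ← e_add]
    have h5 : e (1/4 + (n : ℂ)/2) = e (1/4 + (n : ℂ)/2 + ((-n : ℤ) : ℂ)) := by
      rw [e_add _ ((-n : ℤ) : ℂ), e_int, mul_one]
    rw [h5]
    congr 1
    simp only [Equiv.neg_apply]
    push_cast
    ring
  rw [h2]
  have h4 : ((Equiv.neg ℤ n : ℤ) : ℝ) + 1/2 = 1/2 - n := by
    simp only [Equiv.neg_apply]
    push_cast
    ring
  rw [h4]
  ring
end

section
/- For every τ = u+iv ∈ H, the function g_τ : ℝ → ℂ is odd, continuous on ℝ, differentiable on ℝ ∖ (ℤ+1/2), bounded, and Lebesgue integrable on ℝ (hence g_τ ∈ L^p(ℝ) for all 1 ≤ p ≤ ∞). -/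
open Complex MeasureTheory
open scoped Classical

/-- the theta coefficients -/
noncomputable def tt (τ : ℂ) (m : ℤ) : ℂ :=
  e (((m : ℂ) + 1/2)^2 / 2 * τ + ((m : ℂ) + 1/2) / 2)

/-- finite q-Pochhammer products -/
noncomputable def PP (q : ℂ) (n : ℕ) : ℂ := ∏ k ∈ Finset.range n, (1 - q^(k+1))

lemma PP_succ (q : ℂ) (n : ℕ) : PP q (n+1) = PP q n * (1 - q^(n+1)) := by
  simp [PP, Finset.prod_range_succ]

lemma one_sub_ne {q : ℂ} (hq : ‖q‖ < 1) (n : ℕ) : 1 - q^(n+1) ≠ 0 := by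
  intro h
  have h1 : q^(n+1) = 1 := (sub_eq_zero.mp h).symm
  have h2 : ‖q‖^(n+1) = 1 := by rw [← norm_pow, h1]; simp
  have h3 : ‖q‖^(n+1) < 1 := pow_lt_one₀ (norm_nonneg _) hq (by omega)
  linarith

lemma PP_ne {q : ℂ} (hq : ‖q‖ < 1) (n : ℕ) : PP q n ≠ 0 :=
  Finset.prod_ne_zero_iff.mpr fun k _ => one_sub_ne hq k

lemma e_ne (a : ℂ) : e a ≠ 0 := Complex.exp_ne_zero _

lemma e_zmul (n : ℤ) (a : ℂ) : e (n * a) = e a ^ n := by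
  rw [e, e, ← Complex.exp_int_mul]; congr 1; ring

lemma e_half : e (1/2) = -1 := by
  rw [e, ← Complex.exp_pi_mul_I]; congr 1; ring

lemma tt_succ (τ : ℂ) (m : ℤ) : tt τ (m+1) = -(e τ)^(m+1) * tt τ m := by
  have : ((((m+1 : ℤ) : ℂ) + 1/2)^2 / 2 * τ + (((m+1 : ℤ) : ℂ) + 1/2) / 2)
    = 1/2 + (((m+1 : ℤ) : ℂ) * τ + (((m : ℂ) + 1/2)^2 / 2 * τ + ((m : ℂ) + 1/2) / 2)) := by
    push_cast; ring
  rw [tt, this, e_add, e_half, e_add, e_zmul, tt]; ring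

/-- q-binomial coefficients of the generating function -/
noncomputable def uu (q x : ℂ) : ℕ → ℂ
  | 0 => 1
  | k+1 => q^k * x * uu q x k

lemma qbin {q : ℂ} (hq : ‖q‖ < 1) (x : ℂ) (N : ℕ) :
    ∑ k ∈ Finset.range (N+1), uu q x k / (PP q k * PP q (N-k))
      = (∏ k ∈ Finset.range N, (1 + x * q^k)) / PP q N := by
  induction N with
  | zero => simp [uu, PP]
  | succ N ih =>
    have key : (1 - q^(N+1)) * ∑ k ∈ Finset.range (N+1+1), uu q x k / (PP q k * PP q (N+1-k))
      = (1 + x * q^N) * ∑ k ∈ Finset.range (N+1), uu q x k / (PP q k * PP q (N-k)) := by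
      have h1 : (1 - q^(N+1)) * ∑ k ∈ Finset.range (N+1+1), uu q x k / (PP q k * PP q (N+1-k))
        = ∑ k ∈ Finset.range (N+1+1), (1 - q^(N+1-k)) * (uu q x k / (PP q k * PP q (N+1-k)))
          + ∑ k ∈ Finset.range (N+1+1),
              q^(N+1-k) * (1 - q^k) * (uu q x k / (PP q k * PP q (N+1-k))) := by
        rw [Finset.mul_sum, ← Finset.sum_add_distrib]
        refine Finset.sum_congr rfl fun k hk => ?_
        have : k ≤ N+1 := by simp at hk; omega
        have h : q^(N+1) = q^(N+1-k) * q^k := by rw [← pow_add]; congr 1; omega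
        rw [h]; ring
      rw [h1, Finset.sum_range_succ, Finset.sum_range_succ' _ (N+1), add_mul, one_mul,
        Finset.mul_sum]
      simp only [Nat.sub_self, pow_zero, sub_self, zero_mul, mul_zero, add_zero]
      congr 1
      · refine Finset.sum_congr rfl fun k hk => ?_
        have hk' : k ≤ N := by simp at hk; omega
        have h : N+1-k = (N-k)+1 := by omega
        rw [h, PP_succ]
        have := one_sub_ne hq (N-k)
        have := PP_ne hq (N-k)
        have := PP_ne hq k
        field_simp
      · refine Finset.sum_congr rfl fun k hk => ?_
        have hk' : k ≤ N := by simp at hk; omega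
        have h : N+1-(k+1) = N-k := by omega
        rw [h, PP_succ, uu]
        have := one_sub_ne hq k
        have := PP_ne hq (N-k)
        have := PP_ne hq k
        have h2 : q^N = q^(N-k) * q^k := by rw [← pow_add]; congr 1; omega
        rw [h2]
        field_simp
    rw [ih] at key
    have := one_sub_ne hq N
    have := PP_ne hq N
    rw [Finset.prod_range_succ, PP_succ]
    field_simp
    field_simp at key
    linear_combination key

lemma uu_eq (q x : ℂ) (k : ℕ) : uu q x k = uu q 1 k * x^k := by
  induction k with
  | zero => simp [uu]
  | succ k ih => rw [uu, uu, ih]; ring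

lemma uu_tt (τ : ℂ) (n k : ℕ) :
    uu (e τ) (-((e τ)^n)⁻¹) k * tt τ (-n-1) = tt τ (k - n - 1) := by
  induction k with
  | zero => simp [uu]
  | succ k ih =>
    have : (((k+1 : ℕ) : ℤ) - n - 1) = (k - n - 1 : ℤ) + 1 := by push_cast; ring
    rw [this, tt_succ, ← ih, uu]
    have h : (e τ)^((k - n - 1 : ℤ) + 1) = (e τ)^k * ((e τ)^n)⁻¹ := by
      rw [show ((k - n - 1 : ℤ) + 1) = (k:ℤ) - n by ring, zpow_sub₀ (e_ne _)]
      simp [div_eq_mul_inv]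
    rw [h]; ring

lemma prod_tt (τ : ℂ) (n : ℕ) :
    tt τ (-n-1) * ∏ k ∈ Finset.range n, (1 - ((e τ)^(k+1))⁻¹) = tt τ (-1) * PP (e τ) n := by
  induction n with
  | zero => simp [PP]
  | succ n ih =>
    rw [Finset.prod_range_succ, PP_succ, ← mul_assoc (tt τ (-1)), ← ih]
    have h := tt_succ τ (-(n+1:ℕ) - 1)
    rw [show (-((n+1:ℕ):ℤ) - 1 + 1) = -((n+1:ℕ):ℤ) by ring, zpow_neg, zpow_natCast] at h
    rw [show (-(n:ℤ) - 1) = -((n+1:ℕ):ℤ) by push_cast; ring, h]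
    have := pow_ne_zero (n+1) (e_ne τ)
    field_simp
    ring

lemma finite_jacobi {τ : ℂ} (hq : ‖e τ‖ < 1) (n : ℕ) :
    ∑ k ∈ Finset.range (2*n+1+1), (((k:ℂ) - n - 1) + 1/2) * tt τ (k - n - 1) /
      (PP (e τ) k * PP (e τ) (2*n+1-k)) = - tt τ (-1) * PP (e τ) n ^ 2 / PP (e τ) (2*n+1) := by
  set q := e τ with hqdef
  have hq0 : q ≠ 0 := e_ne τ
  have hqn : q^n ≠ 0 := pow_ne_zero _ hq0
  set x0 : ℂ := -(q^n)⁻¹ with hx0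
  have hx : 1 + x0 * q^n = 0 := by rw [hx0]; field_simp; ring
  -- product splitting
  have hsplit : ∀ x : ℂ, ∏ k ∈ Finset.range (2*n+1), (1 + x * q^k)
      = (1 + x * q^n) * ((∏ k ∈ Finset.range n, (1 + x * q^k)) *
          ∏ k ∈ Finset.range n, (1 + x * q^(n+1+k))) := by
    intro x
    rw [show 2*n+1 = (n+1)+n by ring, Finset.prod_range_add, Finset.prod_range_succ]
    ring
  set R : ℂ → ℂ := fun x => (∏ k ∈ Finset.range n, (1 + x * q^k)) *
          ∏ k ∈ Finset.range n, (1 + x * q^(n+1+k)) with hR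
  have hRd : Differentiable ℂ R := by
    rw [hR]; fun_prop
  have hd1 : HasDerivAt (fun x => (1 + x * q^n) * R x / PP q (2*n+1))
      (q^n * R x0 / PP q (2*n+1)) x0 := by
    have h1 : HasDerivAt (fun x : ℂ => 1 + x * q^n) (q^n) x0 := by
      simpa using ((hasDerivAt_id x0).mul_const (q^n)).const_add 1
    have h2 := (h1.mul (hRd x0).hasDerivAt).div_const (PP q (2*n+1))
    rw [hx, zero_mul, add_zero] at h2
    exact h2
  have hd2 : HasDerivAt (fun x => ∑ k ∈ Finset.range (2*n+1+1),
      uu q 1 k * x^k / (PP q k * PP q (2*n+1-k)))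
      (∑ k ∈ Finset.range (2*n+1+1),
      uu q 1 k * (k * x0^(k-1)) / (PP q k * PP q (2*n+1-k))) x0 := by
    refine HasDerivAt.fun_sum fun k _ => ?_
    exact ((hasDerivAt_pow k x0).const_mul _).div_const _
  have hfun : (fun x => ∑ k ∈ Finset.range (2*n+1+1),
      uu q 1 k * x^k / (PP q k * PP q (2*n+1-k)))
      = (fun x => (1 + x * q^n) * R x / PP q (2*n+1)) := by
    funext x
    rw [hR, ← hsplit, ← qbin hq]
    simp_rw [uu_eq q x]
  have hder := (hfun ▸ hd2).unique hd1
  have hval := congrFun hfun x0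
  simp only [hx, zero_mul, zero_div] at hval
  have hmul : ∀ k : ℕ, (k : ℂ) * x0^(k-1) * x0 = k * x0^k := by
    intro k; cases k with
    | zero => simp
    | succ k => simp [pow_succ]; ring
  have hsum : ∑ k ∈ Finset.range (2*n+1+1), ((k:ℂ) - n - 1 + 1/2) * tt τ (k - n - 1) /
      (PP q k * PP q (2*n+1-k))
      = tt τ (-n-1) * (x0 * ∑ k ∈ Finset.range (2*n+1+1),
          uu q 1 k * (k * x0^(k-1)) / (PP q k * PP q (2*n+1-k))
        + (-n - 1 + 1/2) * ∑ k ∈ Finset.range (2*n+1+1),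
          uu q 1 k * x0^k / (PP q k * PP q (2*n+1-k))) := by
    rw [Finset.mul_sum, Finset.mul_sum, ← Finset.sum_add_distrib, Finset.mul_sum]
    refine Finset.sum_congr rfl fun k _ => ?_
    rw [← uu_tt, ← hqdef, ← hx0, uu_eq q x0]
    linear_combination (-tt τ (-n-1) * uu q 1 k / (PP q k * PP q (2*n+1-k))) * hmul k
  rw [hsum, hder, hval]
  have hR1 : ∏ k ∈ Finset.range n, (1 + x0 * q^(n+1+k)) = PP q n := by
    refine Finset.prod_congr rfl fun k _ => ?_
    rw [hx0, show n+1+k = n + (k+1) by ring, pow_add]; field_simp; ring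
  have hR2 : ∏ k ∈ Finset.range n, (1 + x0 * q^k)
      = ∏ k ∈ Finset.range n, (1 - (q^(k+1))⁻¹) := by
    rw [← Finset.prod_range_reflect]
    refine Finset.prod_congr rfl fun k hk => ?_
    have hk' : k < n := by simpa using hk
    have h : q^n = q^(n-1-k) * q^(k+1) := by rw [← pow_add]; congr 1; omega
    have := pow_ne_zero (k+1) hq0
    have := pow_ne_zero (n-1-k) hq0
    rw [hx0, h]; field_simp; ring
  have hpt := prod_tt τ n
  rw [← hqdef, ← hR2] at hpt
  have hRx : R x0 = (∏ k ∈ Finset.range n, (1 + x0 * q^k)) * PP q n := by rw [hR]; simp only [hR1]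
  rw [hRx]
  linear_combination (-(PP q n) / PP q (2*n+1)) * hpt + (tt τ (-n-1) * (∏ k ∈ Finset.range n, (1 + x0 * q^k)) * PP q n / PP q (2*n+1)) * hx

lemma norm_e (a : ℂ) : ‖e a‖ = Real.exp (-(2 * Real.pi * a.im)) := by
  rw [e, Complex.norm_exp]; congr 1; simp

lemma norm_e_lt {τ : ℂ} (hτ : 0 < τ.im) : ‖e τ‖ < 1 := by
  rw [norm_e, Real.exp_lt_one_iff]
  have := Real.pi_pos
  have : 0 < 2 * Real.pi * τ.im := by positivity
  linarith

lemma norm_tt (τ : ℂ) (m : ℤ) :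
    ‖tt τ m‖ = Real.exp (-(Real.pi * τ.im * ((m : ℝ) + 1/2)^2)) := by
  have h : (((m : ℂ) + 1/2)^2 / 2 * τ + ((m : ℂ) + 1/2) / 2)
    = (((((m : ℝ) + 1/2)^2 / 2 : ℝ)) : ℂ) * τ + ((((m : ℝ) + 1/2) / 2 : ℝ) : ℂ) := by
    push_cast; ring
  rw [tt, h, norm_e]
  congr 1
  simp only [Complex.add_im, Complex.im_ofReal_mul, Complex.ofReal_im]
  ring

lemma summable_bd {v : ℝ} (hv : 0 < v) :
    Summable fun m : ℤ => (|(m : ℝ)| + 1) * Real.exp (-(Real.pi * v * ((m : ℝ) + 1/2)^2)) := by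
  have h0 := summable_pow_mul_jacobiTheta₂_term_bound (v/2) hv 0
  have h1 := summable_pow_mul_jacobiTheta₂_term_bound (v/2) hv 1
  refine (h1.add h0).of_nonneg_of_le (fun m => by positivity) fun m => ?_
  have hle : Real.exp (-(Real.pi * v * ((m : ℝ) + 1/2)^2)) ≤
      Real.exp (-Real.pi * (v * m ^ 2 - 2 * (v/2) * |(m:ℝ)|)) := by
    apply Real.exp_le_exp.mpr
    have h1 : -|(m:ℝ)| ≤ m := neg_abs_le _
    have h2 : 0 < Real.pi * v := mul_pos Real.pi_pos hv
    nlinarith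
  push_cast
  rw [pow_one, pow_zero, ← add_mul]
  gcongr

lemma summable_tt {τ : ℂ} (hτ : 0 < τ.im) :
    Summable fun m : ℤ => (|(m : ℝ)| + 1) * ‖tt τ m‖ := by
  simp_rw [norm_tt]; exact summable_bd hτ

lemma PP_tendsto {q : ℂ} (hq : ‖q‖ < 1) :
    ∃ P : ℂ, P ≠ 0 ∧ Filter.Tendsto (PP q) Filter.atTop (nhds P) := by
  refine ⟨∏' n : ℕ, (1 - q^(n+1)), ?_, ?_⟩
  · simp_rw [sub_eq_add_neg]
    refine tprod_one_add_ne_zero_of_summable (f := fun n : ℕ => -q^(n+1)) ?_ ?_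
    · intro i; simpa [sub_eq_add_neg] using one_sub_ne hq i
    · simpa using (summable_nat_add_iff 1).mpr (summable_geometric_of_lt_one (norm_nonneg _) hq)
  · exact (ModularForm.multipliable_one_sub_pow hq).hasProd.tendsto_prod_nat

/-- inverse Pochhammer on integers -/
noncomputable def iP (q : ℂ) (k : ℤ) : ℂ := if 0 ≤ k then (PP q k.toNat)⁻¹ else 0

lemma abs_half_le (m : ℤ) : ‖(m : ℂ) + 1/2‖ ≤ |(m : ℝ)| + 1 := by
  refine (norm_add_le _ _).trans ?_
  have : ‖(m : ℂ)‖ = |(m : ℝ)| := by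
    simp
  rw [this]
  norm_num

lemma theta_ne {τ : ℂ} (hτ : 0 < τ.im) : ∑' m : ℤ, ((m : ℂ) + 1/2) * tt τ m ≠ 0 := by
  have hq := norm_e_lt hτ
  set q := e τ with hqdef
  obtain ⟨P, hP, hPt⟩ := PP_tendsto hq
  have hnat : Filter.Tendsto (fun n : ℕ => (PP q n)⁻¹) Filter.atTop (nhds P⁻¹) := hPt.inv₀ hP
  obtain ⟨B, hB⟩ := (Metric.isBounded_range_of_tendsto _ hnat).exists_norm_le
  have hBn : ∀ n : ℕ, ‖(PP q n)⁻¹‖ ≤ B := fun n => hB _ ⟨n, rfl⟩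
  have hB0 : 0 ≤ B := (norm_nonneg _).trans (hBn 0)
  have hBi : ∀ k : ℤ, ‖iP q k‖ ≤ B := by
    intro k
    rw [iP]; split_ifs
    · exact hBn _
    · simpa using hB0
  have hiP : Filter.Tendsto (iP q) Filter.atTop (nhds P⁻¹) := by
    have h1 : Filter.Tendsto Int.toNat Filter.atTop Filter.atTop := by
      refine Filter.tendsto_atTop.mpr fun b => ?_
      filter_upwards [Filter.eventually_ge_atTop (b : ℤ)] with a ha
      omega
    refine (hnat.comp h1).congr' ?_
    filter_upwards [Filter.eventually_ge_atTop (0 : ℤ)] with a ha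
    simp [iP, ha]
  intro h0
  have hlim : Filter.Tendsto (fun n : ℕ => ∑' m : ℤ, ((m : ℂ) + 1/2) * tt τ m *
      (iP q (n + 1 + m) * iP q (n - m))) Filter.atTop
      (nhds (∑' m : ℤ, ((m : ℂ) + 1/2) * tt τ m * (P⁻¹ * P⁻¹))) := by
    refine tendsto_tsum_of_dominated_convergence
      (bound := fun m : ℤ => (|(m : ℝ)| + 1) * ‖tt τ m‖ * (B * B)) ((summable_tt hτ).mul_right _) ?_ ?_
    · intro m
      refine Filter.Tendsto.const_mul _ (Filter.Tendsto.mul (hiP.comp ?_) (hiP.comp ?_))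
      · refine Filter.tendsto_atTop.mpr fun b => ?_
        filter_upwards [Filter.eventually_ge_atTop (b - m).toNat] with a ha
        omega
      · refine Filter.tendsto_atTop.mpr fun b => ?_
        filter_upwards [Filter.eventually_ge_atTop (b + m).toNat] with a ha
        omega
    · refine Filter.Eventually.of_forall fun n m => ?_
      rw [norm_mul, norm_mul, norm_mul]
      gcongr
      · exact abs_half_le m
      · exact hBi _
      · exact hBi _
  rw [tsum_mul_right, h0, zero_mul] at hlim
  have heq : ∀ n : ℕ, ∑' m : ℤ, ((m : ℂ) + 1/2) * tt τ m * (iP q (n + 1 + m) * iP q (n - m))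
      = - tt τ (-1) * PP q n ^ 2 / PP q (2*n+1) := by
    intro n
    rw [← finite_jacobi hq n]
    have hinj : Function.Injective (fun k : ℕ => (k : ℤ) - n - 1) := by
      intro a b h; simp at h; exact h
    rw [tsum_eq_sum (s := (Finset.range (2*n+1+1)).image (fun k : ℕ => (k : ℤ) - n - 1)),
      Finset.sum_image hinj.injOn]
    · refine Finset.sum_congr rfl fun k hk => ?_
      have hk' : k ≤ 2*n+1 := by simp at hk; omega
      have e1 : (n : ℤ) + 1 + (k - n - 1) = (k : ℕ) := by ring
      have e2 : (n : ℤ) - (k - n - 1) = ((2*n+1-k : ℕ) : ℤ) := by omega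
      rw [e1, e2, iP, iP, if_pos (by omega), if_pos (by omega), Int.toNat_natCast, Int.toNat_natCast]
      push_cast
      rw [← mul_inv, ← div_eq_mul_inv]
    · intro m hm
      have : n + 1 + m < 0 ∨ n - m < 0 := by
        by_contra! hc
        apply hm
        rw [Finset.mem_image]
        exact ⟨(n + 1 + m).toNat, by simp; omega, by omega⟩
      rcases this with h | h
      · rw [iP, if_neg (by omega)]; simp
      · rw [iP, iP, if_neg (c := 0 ≤ (n:ℤ) - m) (by omega)]; simp
  simp_rw [heq] at hlim
  have hlim2 : Filter.Tendsto (fun n : ℕ => - tt τ (-1) * PP q n ^ 2 / PP q (2*n+1)) Filter.atTop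
      (nhds (- tt τ (-1) * P^2 / P)) := by
    refine Filter.Tendsto.div (Filter.Tendsto.const_mul _ (hPt.pow 2)) (hPt.comp ?_) hP
    exact Filter.tendsto_atTop.mpr fun b => by
      filter_upwards [Filter.eventually_ge_atTop b] with a ha
      omega
  have := tendsto_nhds_unique hlim hlim2
  have ht : tt τ (-1) ≠ 0 := e_ne _
  have : - tt τ (-1) * P^2 / P ≠ 0 := by
    simp [ht, hP]
  simp_all

lemma I_eta3 (τ : ℂ) : Complex.I * eta3 τ = ∑' m : ℤ, ((m : ℂ) + 1/2) * tt τ m := by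
  rw [eta3, ← mul_assoc, mul_neg, Complex.I_mul_I]; simp [tt]

/-- the truncated sum in `gplus` -/
noncomputable def SS (τ : ℂ) (x : ℝ) : ℂ :=
  ∑' m : ℤ, if |x| < (m : ℝ) + 1/2 then (((m : ℝ) + 1/2 - |x| : ℝ) : ℂ) * tt τ m else 0

lemma gplus_eq (τ : ℂ) (x : ℝ) :
    gplus τ x = e (-(x : ℂ)^2 * τ / 2) * ((Real.sign x : ℂ) / (Complex.I * eta3 τ)) * SS τ x := rfl

lemma SS_max (τ : ℂ) (x : ℝ) :
    SS τ x = ∑' m : ℤ, ((max ((m : ℝ) + 1/2 - |x|) 0 : ℝ) : ℂ) * tt τ m := by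
  refine tsum_congr fun m => ?_
  split_ifs with h
  · rw [max_eq_left (by linarith)]
  · rw [max_eq_right (by linarith)]; simp

lemma norm_max_le (m : ℤ) (x : ℝ) :
    ‖((max ((m : ℝ) + 1/2 - |x|) 0 : ℝ) : ℂ)‖ ≤ |(m : ℝ)| + 1 := by
  rw [Complex.norm_real, Real.norm_eq_abs, abs_of_nonneg (le_max_right _ _)]
  have := abs_nonneg x
  have := le_abs_self (m : ℝ)
  have := abs_nonneg (m : ℝ)
  exact max_le (by linarith) (by linarith)

lemma SS_cont {τ : ℂ} (hτ : 0 < τ.im) : Continuous (SS τ) := by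
  have : SS τ = fun x => ∑' m : ℤ, ((max ((m : ℝ) + 1/2 - |x|) 0 : ℝ) : ℂ) * tt τ m :=
    funext (SS_max τ)
  rw [this]
  refine continuous_tsum (u := fun m : ℤ => (|(m : ℝ)| + 1) * ‖tt τ m‖) ?_ (summable_tt hτ) ?_
  · intro m; fun_prop
  · intro m x
    rw [norm_mul]
    gcongr
    exact norm_max_le m x

lemma tt_refl (τ : ℂ) (m : ℤ) : tt τ (-1 - m) = - tt τ m := by
  have h : ((((-1 - m : ℤ) : ℂ) + 1/2)^2 / 2 * τ + (((-1 - m : ℤ) : ℂ) + 1/2) / 2)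
    = (((-1 - m : ℤ) : ℂ) * 1) + (1/2 + (((m : ℂ) + 1/2)^2 / 2 * τ + ((m : ℂ) + 1/2) / 2)) := by
    push_cast; ring
  have e1 : e 1 = 1 := by rw [e, mul_one, Complex.exp_two_pi_mul_I]
  rw [tt, h, e_add, e_zmul, e1, e_add, e_half, tt]; simp

lemma SS_zero {τ : ℂ} (hτ : 0 < τ.im) : Complex.I * eta3 τ = 2 * SS τ 0 := by
  rw [I_eta3, SS_max, two_mul]
  simp only [abs_zero, sub_zero]
  have hs : Summable fun m : ℤ => ((max ((m : ℝ) + 1/2) 0 : ℝ) : ℂ) * tt τ m := by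
    refine Summable.of_norm_bounded (summable_tt hτ) fun m => ?_
    rw [norm_mul]
    gcongr
    simpa using norm_max_le m 0
  have hs2 := (Equiv.subLeft (-1 : ℤ)).summable_iff.mpr hs
  have he := (Equiv.subLeft (-1 : ℤ)).tsum_eq
    fun m : ℤ => ((max ((m : ℝ) + 1/2) 0 : ℝ) : ℂ) * tt τ m
  have ha := hs.tsum_add hs2
  simp only [Function.comp_def] at ha
  rw [he] at ha
  rw [← ha]
  refine tsum_congr fun m => ?_
  simp only [Equiv.subLeft_apply, tt_refl]
  rw [mul_neg, ← sub_eq_add_neg, ← sub_mul, ← Complex.ofReal_sub]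
  congr 1
  have : max ((m : ℝ) + 1/2) 0 - max ((((-1 - m : ℤ) : ℝ)) + 1/2) 0 = m + 1/2 := by
    push_cast
    rcases le_total ((m : ℝ) + 1/2) 0 with h | h
    · rw [max_eq_right h, max_eq_left (by linarith)]; ring
    · rw [max_eq_left h, max_eq_right (by linarith)]; ring
  rw [this]; push_cast; ring

/-- unnormalised error function -/
noncomputable def EE (y : ℝ) : ℝ := ∫ t in (0:ℝ)..y, Real.exp (-t^2)

lemma gauss_int : Integrable fun t : ℝ => Real.exp (-t^2) := by
  simpa using integrable_exp_neg_mul_sq (b := 1) one_pos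

lemma erfc_eq (y : ℝ) : erfc y = 1 - 2 / Real.sqrt Real.pi * EE y := by
  have h := intervalIntegral.integral_interval_add_Ioi (a := 0) (b := y)
    gauss_int.integrableOn gauss_int.integrableOn
  have h2 : ∫ t in Set.Ioi (0:ℝ), Real.exp (-t^2) = Real.sqrt Real.pi / 2 := by
    simpa using integral_gaussian_Ioi 1
  have h3 : Real.sqrt Real.pi ≠ 0 := (Real.sqrt_pos.mpr Real.pi_pos).ne'
  rw [h2] at h
  rw [erfc, EE, eq_sub_of_add_eq' h]
  field_simp

lemma EE_diff : Differentiable ℝ EE := fun y =>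
  (intervalIntegral.integral_hasDerivAt_right gauss_int.intervalIntegrable
    gauss_int.aestronglyMeasurable.stronglyMeasurableAtFilter
    (by fun_prop)).differentiableAt

lemma EE_neg (y : ℝ) : EE (-y) = - EE y := by
  have := intervalIntegral.integral_comp_neg (a := 0) (b := y) (fun t : ℝ => Real.exp (-t^2))
  simp only [neg_sq, neg_zero] at this
  rw [EE, EE, this, intervalIntegral.integral_symm]

lemma sign_EE (c x : ℝ) : Real.sign x * EE (c * |x|) = EE (c * x) := by
  rcases lt_trichotomy x 0 with h | h | h
  · rw [Real.sign_of_neg h, abs_of_neg h, mul_neg, EE_neg]; ring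
  · subst h; simp [EE]
  · rw [Real.sign_of_pos h, abs_of_pos h, one_mul]

lemma gfun_eq (τ : ℂ) (x : ℝ) : gfun τ x = e (-(x : ℂ)^2 * τ / 2) *
    ((Real.sign x : ℂ) * (SS τ x / (Complex.I * eta3 τ) - 1/2) +
      ((1 / Real.sqrt Real.pi * EE (Real.sqrt (2 * Real.pi * τ.im) * x) : ℝ) : ℂ)) := by
  rw [gfun, gplus_eq, gstar, erfc_eq, ← sign_EE _ x]
  push_cast
  ring

lemma sign_mul_cont {h : ℝ → ℂ} (hc : Continuous h) (h0 : h 0 = 0) :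
    Continuous fun x => (Real.sign x : ℂ) * h x := by
  have : (fun x => (Real.sign x : ℂ) * h x) = fun x => if x ≤ 0 then - h x else h x := by
    funext x
    rcases lt_trichotomy x 0 with h | h | h
    · simp [Real.sign_of_neg h, h.le]
    · subst h; simp [h0]
    · simp [Real.sign_of_pos h, not_le.mpr h]
  rw [this]
  refine Continuous.if_le hc.neg hc continuous_id continuous_const ?_
  intro x hx
  rw [hx, h0, neg_zero]

lemma e_diff (τ : ℂ) : Differentiable ℝ fun x : ℝ => e (-(x : ℂ)^2 * τ / 2) := by
  have h : Differentiable ℝ (fun x : ℝ => (x : ℂ)) := Complex.ofRealCLM.differentiable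
  have : Differentiable ℝ fun x : ℝ => 2 * (Real.pi : ℂ) * Complex.I * (-(x : ℂ)^2 * τ / 2) := by
    fun_prop
  exact this.cexp

lemma ratio {τ : ℂ} (hτ : 0 < τ.im) : SS τ 0 / (Complex.I * eta3 τ) = 1/2 := by
  have h : Complex.I * eta3 τ ≠ 0 := by rw [I_eta3]; exact theta_ne hτ
  rw [SS_zero hτ] at h ⊢
  have : SS τ 0 ≠ 0 := fun h0 => h (by rw [h0, mul_zero])
  field_simp

lemma EE_part_diff (τ : ℂ) : Differentiable ℝ fun x : ℝ =>
    ((1 / Real.sqrt Real.pi * EE (Real.sqrt (2 * Real.pi * τ.im) * x) : ℝ) : ℂ) := by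
  have h : Differentiable ℝ (fun x : ℝ => (x : ℂ)) := Complex.ofRealCLM.differentiable
  refine h.comp ?_
  refine Differentiable.const_mul (EE_diff.comp ?_) _
  fun_prop

lemma gfun_cont {τ : ℂ} (hτ : 0 < τ.im) : Continuous (gfun τ) := by
  rw [funext (gfun_eq τ)]
  refine (e_diff τ).continuous.mul (Continuous.add ?_ (EE_part_diff τ).continuous)
  refine sign_mul_cont (((SS_cont hτ).div_const _).sub continuous_const) ?_
  rw [ratio hτ, sub_self]

lemma SS_local {τ : ℂ} (hτ : 0 < τ.im) (x0 : ℝ) (hx : ∀ m : ℤ, x0 ≠ (m : ℝ) + 1/2) :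
    ∃ A B : ℂ, ∀ᶠ x in nhds x0, SS τ x = A - (|x| : ℝ) * B := by
  set k : ℤ := ⌊|x0| + 1/2⌋ with hk
  have hx' : ∀ m : ℤ, |x0| ≠ (m : ℝ) + 1/2 := by
    intro m hm
    rcases abs_choice x0 with h | h
    · exact hx m (h ▸ hm)
    · apply hx (-1 - m)
      push_cast
      linarith
  have h1 : (k : ℝ) - 1/2 < |x0| := by
    have h := Int.floor_le (|x0| + 1/2)
    rw [← hk] at h
    refine lt_of_le_of_ne (by linarith) fun h => hx' (k-1) ?_
    push_cast; linarith
  have h2 : |x0| < (k : ℝ) + 1/2 := by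
    have h := Int.lt_floor_add_one (|x0| + 1/2)
    rw [← hk] at h; linarith
  refine ⟨∑' m : ℤ, if k ≤ m then ((m : ℂ) + 1/2) * tt τ m else 0,
    ∑' m : ℤ, if k ≤ m then tt τ m else 0, ?_⟩
  have hc : Continuous fun x : ℝ => |x| := continuous_abs
  filter_upwards [hc.continuousAt.eventually (lt_mem_nhds h1),
    hc.continuousAt.eventually (gt_mem_nhds h2)] with x hx1 hx2
  have s1 : Summable fun m : ℤ => if k ≤ m then ((m : ℂ) + 1/2) * tt τ m else 0 := by
    refine Summable.of_norm_bounded (summable_tt hτ) fun m => ?_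
    split_ifs
    · rw [norm_mul]; gcongr; exact abs_half_le m
    · rw [norm_zero]; positivity
  have s2 : Summable fun m : ℤ => if k ≤ m then tt τ m else 0 := by
    refine Summable.of_norm_bounded (summable_tt hτ) fun m => ?_
    split_ifs
    · have := abs_nonneg (m : ℝ)
      have := norm_nonneg (tt τ m)
      nlinarith
    · rw [norm_zero]; positivity
  rw [SS, ← tsum_mul_left, ← s1.tsum_sub (s2.mul_left _)]
  refine tsum_congr fun m => ?_
  have hiff : |x| < (m : ℝ) + 1/2 ↔ k ≤ m := by
    constructor
    · intro h
      have : (k : ℝ) < ((m + 1 : ℤ) : ℝ) := by push_cast; linarith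
      have := Int.cast_lt.mp this
      omega
    · intro h
      have : (k : ℝ) ≤ m := by exact_mod_cast h
      linarith
  simp only [hiff]
  split_ifs
  · push_cast; ring
  · simp

lemma sign_abs (x : ℝ) : Real.sign x * |x| = x := by
  rcases lt_trichotomy x 0 with h | h | h
  · rw [Real.sign_of_neg h, abs_of_neg h]; ring
  · subst h; simp
  · rw [Real.sign_of_pos h, abs_of_pos h, one_mul]

lemma gfun_diff {τ : ℂ} (hτ : 0 < τ.im) (x0 : ℝ) (hx : ∀ m : ℤ, x0 ≠ (m : ℝ) + 1/2) :
    DifferentiableAt ℝ (gfun τ) x0 := by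
  rw [funext (gfun_eq τ)]
  refine ((e_diff τ) x0).mul (DifferentiableAt.add ?_ ((EE_part_diff τ) x0))
  obtain ⟨A, B, hAB⟩ := SS_local hτ x0 hx
  set D := Complex.I * eta3 τ with hD
  have hof : Differentiable ℝ (fun x : ℝ => (x : ℂ)) := Complex.ofRealCLM.differentiable
  have key : ∀ᶠ x in nhds x0, (Real.sign x : ℂ) * (SS τ x / D - 1/2)
      = (Real.sign x0 : ℂ) * (A / D - 1/2) - x * (B / D) := by
    have hg : ∀ᶠ x in nhds x0, (Real.sign x : ℂ) * (A / D - 1/2)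
        = (Real.sign x0 : ℂ) * (A / D - 1/2) := by
      rcases lt_trichotomy x0 0 with h | h | h
      · filter_upwards [gt_mem_nhds h] with x hx
        rw [Real.sign_of_neg h, Real.sign_of_neg hx]
      · have h0 := hAB.self_of_nhds
        rw [h] at h0
        have h1 : A / D = 1/2 := by
          rw [← ratio hτ, h0]; simp [hD]
        simp [h1]
      · filter_upwards [lt_mem_nhds h] with x hx
        rw [Real.sign_of_pos h, Real.sign_of_pos hx]
    filter_upwards [hAB, hg] with x h1 h2
    have h3 : (Real.sign x : ℂ) * ((|x| : ℝ) : ℂ) = x := by exact_mod_cast sign_abs x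
    rw [h1]
    linear_combination h2 - B / D * h3
  refine DifferentiableAt.congr_of_eventuallyEq ?_ key
  exact ((hof x0).mul_const _).const_sub _

lemma gfun_odd (τ : ℂ) (x : ℝ) : gfun τ (-x) = -gfun τ x := by
  simp only [gfun, gplus, gstar, abs_neg, Real.sign_neg, Complex.ofReal_neg, neg_sq]
  ring

/-- truncated Gamma density -/
noncomputable def ph (a r : ℝ) : ℝ := if 0 < r then r * Real.exp (-(a * r)) else 0

lemma ph_nonneg (a r : ℝ) : 0 ≤ ph a r := by
  rw [ph]; split_ifs <;> positivity

/-- summands of `gplus` -/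
noncomputable def FF (τ : ℂ) (m : ℤ) (x : ℝ) : ℂ :=
  e (-(x : ℂ)^2 * τ / 2) * (((max ((m : ℝ) + 1/2 - |x|) 0 : ℝ) : ℂ) * tt τ m)

lemma gplus_FF (τ : ℂ) (x : ℝ) :
    gplus τ x = ((Real.sign x : ℂ) / (Complex.I * eta3 τ)) * ∑' m : ℤ, FF τ m x := by
  rw [gplus_eq, SS_max]
  simp only [FF]
  rw [tsum_mul_left]; ring

lemma norm_ex (τ : ℂ) (x : ℝ) :
    ‖e (-(x : ℂ)^2 * τ / 2)‖ = Real.exp (Real.pi * τ.im * x^2) := by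
  have : -(x : ℂ)^2 * τ / 2 = ((-x^2/2 : ℝ) : ℂ) * τ := by push_cast; ring
  rw [this, norm_e, Complex.im_ofReal_mul]
  congr 1; ring

lemma FF_bound {τ : ℂ} (hτ : 0 < τ.im) (m : ℤ) (x : ℝ) :
    ‖FF τ m x‖ ≤ ph (Real.pi * τ.im * ((m : ℝ) + 1/2)) ((m : ℝ) + 1/2 - |x|) := by
  rw [FF, norm_mul, norm_mul, norm_ex, norm_tt, ph, Complex.norm_real, Real.norm_eq_abs,
    abs_of_nonneg (le_max_right _ _)]
  split_ifs with h
  · rw [max_eq_left h.le, mul_left_comm, ← Real.exp_add]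
    refine mul_le_mul_of_nonneg_left (Real.exp_le_exp.mpr ?_) h.le
    have h2 : 0 < Real.pi * τ.im := mul_pos Real.pi_pos hτ
    have h3 := abs_nonneg x
    rw [← sq_abs x]
    have : 0 ≤ Real.pi * τ.im * (|x| * ((m : ℝ) + 1/2 - |x|)) := by positivity
    nlinarith
  · rw [max_eq_right (by linarith)]; simp

lemma ph_le_one {a r : ℝ} (ha : 0 < a) (hr : r < 1) : ph a r ≤ 1 := by
  rw [ph]; split_ifs with h
  · have : Real.exp (-(a*r)) ≤ 1 := Real.exp_le_one_iff.mpr (by nlinarith)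
    have := Real.exp_pos (-(a*r))
    nlinarith
  · norm_num

lemma ph_le {a r : ℝ} (ha : 0 < a) (hr : 1 ≤ r) : ph a r ≤ 2 / a^2 := by
  have hr0 : 0 < r := by linarith
  rw [ph, if_pos hr0, Real.exp_neg, ← div_eq_mul_inv, div_le_div_iff₀ (Real.exp_pos _) (by positivity)]
  have h := Real.quadratic_le_exp_of_nonneg (x := a * r) (by positivity)
  have h1 : 0 < a * r := by positivity
  have h2 : r * a^2 ≤ (a*r)^2 := by
    have : 0 ≤ a^2 * r * (r - 1) := by
      have : 0 ≤ r - 1 := by linarith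
      positivity
    nlinarith
  nlinarith

lemma half_ne (m : ℤ) : (m : ℝ) + 1/2 ≠ 0 := by
  intro h
  have h1 : ((2 * m + 1 : ℤ) : ℝ) = 0 := by push_cast; linarith
  have := Int.cast_eq_zero.mp h1
  omega

lemma summable_sq (c : ℝ) : Summable fun m : ℤ => 2 / (c * ((m : ℝ) + 1/2))^2 := by
  have h := ((Real.summable_one_div_int_add_rpow (1/2) 2).mpr one_lt_two).mul_left (2 / c^2)
  refine h.congr fun m => ?_
  rw [Real.rpow_two, sq_abs, mul_pow, div_mul_div_comm, mul_one]

lemma tsum_FF_bdd {τ : ℂ} (hτ : 0 < τ.im) : ∃ C : ℝ, ∀ x : ℝ, ‖∑' m : ℤ, FF τ m x‖ ≤ C := by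
  set c := Real.pi * τ.im with hc
  have hc0 : 0 < c := mul_pos Real.pi_pos hτ
  refine ⟨(∑' m : ℤ, 2 / (c * ((m : ℝ) + 1/2))^2) + 1, fun x => ?_⟩
  have hs := (summable_sq c).hasSum.add (hasSum_ite_eq (⌈|x| - 1/2⌉ : ℤ) (1 : ℝ))
  refine tsum_of_norm_bounded hs fun m => (FF_bound hτ m x).trans ?_
  rw [← hc]
  by_cases h : 0 < (m : ℝ) + 1/2 - |x|
  · have hM : 0 < (m : ℝ) + 1/2 := by linarith [abs_nonneg x]
    have ha : 0 < c * ((m : ℝ) + 1/2) := by positivity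
    by_cases h1 : (m : ℝ) + 1/2 - |x| < 1
    · have : m = ⌈|x| - 1/2⌉ := by
        symm; rw [Int.ceil_eq_iff]; constructor <;> linarith
      rw [if_pos this]
      have := ph_le_one ha h1
      have : 0 ≤ 2 / (c * ((m : ℝ) + 1/2))^2 := by positivity
      linarith
    · have := ph_le ha (not_lt.mp h1)
      have : (0:ℝ) ≤ if m = ⌈|x| - 1/2⌉ then 1 else 0 := by split_ifs <;> norm_num
      linarith
  · rw [ph, if_neg h]
    have : 0 ≤ 2 / (c * ((m : ℝ) + 1/2))^2 := by positivity
    have : (0:ℝ) ≤ if m = ⌈|x| - 1/2⌉ then 1 else 0 := by split_ifs <;> norm_num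
    linarith

lemma lint_ph {a : ℝ} (ha : 0 < a) : ∫⁻ r, ENNReal.ofReal (ph a r) = ENNReal.ofReal (1 / a^2) := by
  have h := Real.integral_rpow_mul_exp_neg_mul_Ioi (a := 2) two_pos ha
  rw [show (2:ℝ) - 1 = 1 by norm_num, Real.Gamma_two] at h
  simp only [Real.rpow_one, Real.rpow_two, mul_one] at h
  have hi : IntegrableOn (fun t : ℝ => t * Real.exp (-(a * t))) (Set.Ioi 0) :=
    Integrable.of_integral_ne_zero (by rw [h]; positivity)
  have h2 := ofReal_integral_eq_lintegral_ofReal hi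
    ((ae_restrict_iff' measurableSet_Ioi).mpr (ae_of_all _ fun t (ht : 0 < t) => by positivity))
  rw [h, div_pow, one_pow] at h2
  rw [h2, ← lintegral_indicator measurableSet_Ioi]
  refine lintegral_congr fun r => ?_
  by_cases hr : 0 < r
  · rw [Set.indicator_of_mem (Set.mem_Ioi.mpr hr), ph, if_pos hr]
  · rw [Set.indicator_of_notMem (by simpa using hr), ph, if_neg hr, ENNReal.ofReal_zero]

lemma lint_FF {τ : ℂ} (hτ : 0 < τ.im) (m : ℤ) :
    ∫⁻ x, ‖FF τ m x‖ₑ ≤ ENNReal.ofReal (2 / (Real.pi * τ.im * ((m : ℝ) + 1/2))^2) := by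
  set c := Real.pi * τ.im with hc
  have hc0 : 0 < c := mul_pos Real.pi_pos hτ
  set M : ℝ := (m : ℝ) + 1/2 with hM
  have hb : ∀ x, ‖FF τ m x‖ₑ ≤ ENNReal.ofReal (ph (c*M) (M - |x|)) := by
    intro x
    rw [← ofReal_norm]
    exact ENNReal.ofReal_le_ofReal (FF_bound hτ m x)
  by_cases h : 0 < M
  · have ha : 0 < c * M := by positivity
    have hm : Measurable (fun r => ENNReal.ofReal (ph (c*M) r)) := by
      refine Measurable.ennreal_ofReal ?_
      unfold ph
      exact Measurable.ite measurableSet_Ioi (by fun_prop) measurable_const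
    calc ∫⁻ x, ‖FF τ m x‖ₑ
        ≤ ∫⁻ x, (ENNReal.ofReal (ph (c*M) (M - x)) + ENNReal.ofReal (ph (c*M) (M + x))) := by
          refine lintegral_mono fun x => (hb x).trans ?_
          rcases abs_choice x with hx | hx
          · rw [hx]; exact le_self_add
          · rw [hx, sub_neg_eq_add]; exact le_add_self
      _ = ENNReal.ofReal (1 / (c*M)^2) + ENNReal.ofReal (1 / (c*M)^2) := by
          have hm2 : Measurable (fun x => ENNReal.ofReal (ph (c*M) (M - x))) :=
            hm.comp (measurable_const.sub measurable_id)
          rw [lintegral_add_left hm2,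
            lintegral_sub_left_eq_self (fun r => ENNReal.ofReal (ph (c*M) r)) M,
            lintegral_add_left_eq_self (fun r => ENNReal.ofReal (ph (c*M) r)) M, lint_ph ha]
      _ = ENNReal.ofReal (2 / (c*M)^2) := by
          rw [← ENNReal.ofReal_add (by positivity) (by positivity)]
          congr 1; ring
      _ ≤ _ := le_rfl
  · have : ∀ x, ‖FF τ m x‖ₑ = 0 := by
      intro x
      refine le_antisymm ((hb x).trans ?_) zero_le
      rw [ph, if_neg (by linarith [abs_nonneg x])]; simp
    simp [this]

lemma FF_cont (τ : ℂ) (m : ℤ) : Continuous (FF τ m) := by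
  refine (e_diff τ).continuous.mul ?_
  fun_prop

lemma tsum_FF_int {τ : ℂ} (hτ : 0 < τ.im) : Integrable fun x : ℝ => ∑' m : ℤ, FF τ m x := by
  constructor
  · have : (fun x : ℝ => ∑' m : ℤ, FF τ m x) = fun x : ℝ => e (-(x : ℂ)^2 * τ / 2) * SS τ x := by
      funext x
      simp only [FF]
      rw [tsum_mul_left, SS_max]
    rw [this]
    exact ((e_diff τ).continuous.mul (SS_cont hτ)).aestronglyMeasurable
  · rw [HasFiniteIntegral]
    calc ∫⁻ x, ‖∑' m : ℤ, FF τ m x‖ₑ ≤ ∫⁻ x, ∑' m : ℤ, ‖FF τ m x‖ₑ :=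
          lintegral_mono fun x => enorm_tsum_le_tsum_enorm
      _ = ∑' m : ℤ, ∫⁻ x, ‖FF τ m x‖ₑ :=
          lintegral_tsum fun m => (FF_cont τ m).enorm.measurable.aemeasurable
      _ ≤ ∑' m : ℤ, ENNReal.ofReal (2 / (Real.pi * τ.im * ((m : ℝ) + 1/2))^2) :=
          ENNReal.tsum_le_tsum fun m => lint_FF hτ m
      _ < ⊤ := (summable_sq _).tsum_ofReal_lt_top

lemma erfc_bound {y : ℝ} (hy : 0 ≤ y) : |erfc y| ≤ 2 * Real.exp (-y^2) := by
  have hp : 0 < Real.sqrt Real.pi := Real.sqrt_pos.mpr Real.pi_pos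
  have h0 : 0 ≤ ∫ t in Set.Ioi y, Real.exp (-t^2) := integral_nonneg fun t => (Real.exp_pos _).le
  have hi : Integrable fun t : ℝ => Real.exp (-y^2) * Real.exp (-(t - y)^2) :=
    (gauss_int.comp_sub_right y).const_mul _
  have h1 : ∫ t in Set.Ioi y, Real.exp (-t^2) ≤ Real.exp (-y^2) * Real.sqrt Real.pi := by
    calc ∫ t in Set.Ioi y, Real.exp (-t^2)
        ≤ ∫ t in Set.Ioi y, Real.exp (-y^2) * Real.exp (-(t - y)^2) := by
          refine setIntegral_mono_on gauss_int.integrableOn hi.integrableOn measurableSet_Ioi ?_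
          intro t ht
          rw [← Real.exp_add]
          apply Real.exp_le_exp.mpr
          have : y < t := ht
          nlinarith
      _ ≤ ∫ t, Real.exp (-y^2) * Real.exp (-(t - y)^2) :=
          setIntegral_le_integral hi (ae_of_all _ fun t => by positivity)
      _ = Real.exp (-y^2) * Real.sqrt Real.pi := by
          rw [integral_const_mul, integral_sub_right_eq_self (fun t : ℝ => Real.exp (-t^2)) y]
          have := integral_gaussian 1
          simp only [neg_mul, one_mul, div_one] at this
          rw [this]
  rw [erfc, abs_of_nonneg (by positivity), div_mul_eq_mul_div, div_le_iff₀ hp]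
  linarith

lemma abs_sign_le (x : ℝ) : ‖(Real.sign x : ℂ)‖ ≤ 1 := by
  rcases Real.sign_apply_eq x with h | h | h <;> rw [h] <;> simp

lemma gstar_bound {τ : ℂ} (hτ : 0 < τ.im) (x : ℝ) :
    ‖gstar τ x‖ ≤ Real.exp (-(Real.pi * τ.im) * x^2) := by
  have hv : 0 < Real.pi * τ.im := mul_pos Real.pi_pos hτ
  have h1 := erfc_bound (y := Real.sqrt (2 * Real.pi * τ.im) * |x|) (by positivity)
  rw [mul_pow, Real.sq_sqrt (by linarith), sq_abs] at h1
  rw [gstar, norm_mul, norm_mul, norm_ex, norm_div, Complex.norm_real (erfc _), Real.norm_eq_abs]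
  have h2 : ‖(Real.sign x : ℂ)‖ / ‖(2 : ℂ)‖ ≤ 1 / 2 := by
    have := abs_sign_le x
    rw [Complex.norm_ofNat]
    linarith
  calc _ ≤ Real.exp (Real.pi * τ.im * x^2) * (1/2) *
        (2 * Real.exp (-(2 * Real.pi * τ.im * x^2))) := by gcongr
    _ = Real.exp (Real.pi * τ.im * x^2) * Real.exp (-(2 * Real.pi * τ.im * x^2)) := by ring
    _ = _ := by rw [← Real.exp_add]; congr 1; ring

lemma gfun_bound {τ : ℂ} (hτ : 0 < τ.im) (x : ℝ) :
    ‖gfun τ x‖ ≤ ‖Complex.I * eta3 τ‖⁻¹ * ‖∑' m : ℤ, FF τ m x‖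
      + Real.exp (-(Real.pi * τ.im) * x^2) := by
  rw [gfun]
  refine (norm_sub_le _ _).trans (add_le_add ?_ (gstar_bound hτ x))
  rw [gplus_FF, norm_mul, norm_div, ← one_div]
  gcongr
  exact abs_sign_le x

/-- basic properties of `g_τ`. -/
theorem gfun_basic_properties (τ : ℂ) (hτ : 0 < τ.im) :
    (∀ x : ℝ, gfun τ (-x) = -gfun τ x) ∧
    Continuous (gfun τ) ∧
    (∀ x : ℝ, (∀ m : ℤ, x ≠ (m : ℝ) + 1/2) → DifferentiableAt ℝ (gfun τ) x) ∧
    (∃ C : ℝ, ∀ x : ℝ, ‖gfun τ x‖ ≤ C) ∧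
    MeasureTheory.Integrable (gfun τ) := by
  have hv : 0 < Real.pi * τ.im := mul_pos Real.pi_pos hτ
  refine ⟨gfun_odd τ, gfun_cont hτ, gfun_diff hτ, ?_, ?_⟩
  · obtain ⟨C, hC⟩ := tsum_FF_bdd hτ
    refine ⟨‖Complex.I * eta3 τ‖⁻¹ * C + 1, fun x => (gfun_bound hτ x).trans ?_⟩
    have h1 : Real.exp (-(Real.pi * τ.im) * x^2) ≤ 1 :=
      Real.exp_le_one_iff.mpr (by nlinarith [sq_nonneg x])
    gcongr
    exact hC x
  · refine Integrable.mono' (((tsum_FF_int hτ).norm.const_mul _).add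
      (integrable_exp_neg_mul_sq hv)) (gfun_cont hτ).aestronglyMeasurable
      (ae_of_all _ fun x => gfun_bound hτ x)
end

section
/- For every fixed x ∈ ℝ, the function τ ↦ g_τ(x) on H satisfies ξ₁ g_τ(x) = (√(2v)/2) · x · e(x²τ/2), i.e. 2iv · conj(∂/∂conj(τ) g_τ(x)) = (√(2v)/2) · x · e(x²τ/2) for all τ = u+iv ∈ H. -/
open Complex MeasureTheory
open scoped Classical

/-- finite q-Pochhammer product -/
noncomputable def qPoch (q : ℂ) (n : ℕ) : ℂ := ∏ k ∈ Finset.range n, (1 - q ^ (k + 1))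

/-- reciprocal q-Pochhammer, extended by zero -/
noncomputable def qRec (q : ℂ) (m : ℤ) : ℂ := if 0 ≤ m then (qPoch q m.toNat)⁻¹ else 0

lemma one_sub_pow_ne {q : ℂ} (hq : ‖q‖ < 1) (k : ℕ) : 1 - q ^ (k + 1) ≠ 0 := by
  intro h
  have h1 : ‖q ^ (k+1)‖ = 1 := by rw [← sub_eq_zero.mp h]; simp
  rw [norm_pow] at h1
  have := pow_lt_one₀ (norm_nonneg q) hq (Nat.succ_ne_zero k)
  simp only [Nat.succ_eq_add_one] at this
  linarith

lemma qPoch_ne {q : ℂ} (hq : ‖q‖ < 1) (n : ℕ) : qPoch q n ≠ 0 :=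
  Finset.prod_ne_zero_iff.mpr fun k _ => one_sub_pow_ne hq k

lemma qPoch_succ (q : ℂ) (n : ℕ) : qPoch q (n+1) = qPoch q n * (1 - q ^ (n+1)) := by
  simp [qPoch, Finset.prod_range_succ]

lemma qRec_pred {q : ℂ} (hq : ‖q‖ < 1) (m : ℤ) : qRec q (m - 1) = (1 - q ^ m) * qRec q m := by
  rcases lt_trichotomy m 0 with h | h | h
  · simp [qRec, not_le.mpr h, show ¬ (1 ≤ m) by omega]
  · subst h; simp [qRec]
  · obtain ⟨k, rfl⟩ : ∃ k : ℕ, m = k + 1 := ⟨(m-1).toNat, by omega⟩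
    have h1 : ((k:ℤ) + 1).toNat = k + 1 := by omega
    have h2 := one_sub_pow_ne hq k
    have h3 := qPoch_ne hq k
    have h4 : q ^ ((k:ℤ)+1) = q ^ (k+1) := by exact_mod_cast zpow_natCast q (k+1)
    simp only [qRec, add_sub_cancel_right, h1, qPoch_succ, h4]
    simp only [Int.natCast_nonneg, if_true, show (0:ℤ) ≤ k + 1 by omega, Int.toNat_natCast]
    field_simp

open Filter Topology in
lemma qPoch_tendsto {q : ℂ} (hq : ‖q‖ < 1) :
    ∃ P : ℂ, P ≠ 0 ∧ Tendsto (qPoch q) atTop (𝓝 P) := by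
  have hs : Summable fun n : ℕ => ‖-q ^ (n+1)‖ := by
    simpa using (summable_nat_add_iff 1).mpr (summable_geometric_of_lt_one (norm_nonneg _) hq)
  refine ⟨∏' n : ℕ, (1 + -q ^ (n+1)), tprod_one_add_ne_zero_of_summable (fun i => by
    simpa [← sub_eq_add_neg] using one_sub_pow_ne hq i) hs, ?_⟩
  have := (multipliable_one_add_of_summable hs).hasProd.tendsto_prod_nat
  refine this.congr fun n => ?_
  simp [qPoch, sub_eq_add_neg]

open Filter Topology in
lemma qRec_tendsto {q P : ℂ} (hP : P ≠ 0) (h : Tendsto (qPoch q) atTop (𝓝 P))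
    (f : ℕ → ℤ) (hf : Tendsto f atTop atTop) :
    Tendsto (fun n => qRec q (f n)) atTop (𝓝 P⁻¹) := by
  have h1 : Tendsto (fun n => (f n).toNat) atTop atTop := by
    rw [tendsto_atTop] at hf ⊢
    intro b
    filter_upwards [hf b] with n hn
    omega
  refine ((h.comp h1).inv₀ hP).congr' ?_
  filter_upwards [hf.eventually_ge_atTop 0] with n hn
  simp [qRec, hn]

open Filter Topology in
lemma qRec_bdd {q P : ℂ} (hP : P ≠ 0) (h : Tendsto (qPoch q) atTop (𝓝 P)) :
    ∃ C : ℝ, 0 ≤ C ∧ ∀ m, ‖qRec q m‖ ≤ C := by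
  obtain ⟨C, hC⟩ := (h.inv₀ hP).norm.bddAbove_range
  have hC' : ∀ n, ‖(qPoch q n)⁻¹‖ ≤ C := fun n => hC ⟨n, rfl⟩
  have h0 : 0 ≤ C := (norm_nonneg _).trans (hC' 0)
  refine ⟨C, h0, fun m => ?_⟩
  unfold qRec
  split_ifs
  · exact hC' _
  · simpa using h0

/-- finite theta term -/
noncomputable def thF (q : ℂ) (t : ℤ → ℂ) (n : ℕ) (m : ℤ) : ℂ :=
  t m * qRec q (n + 1 + m) * qRec q (n - m)

lemma thF_rec {q : ℂ} (hq : ‖q‖ < 1) (hq0 : q ≠ 0) (t : ℤ → ℂ)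
    (ht : ∀ m, t (m+1) = - q ^ (m+1) * t m) (n : ℕ) (m : ℤ) :
    (1 - q ^ (2*n+2)) * (1 - q ^ (2*n+3)) * thF q t (n+1) m =
      (1 + q ^ (2*n+2)) * thF q t n m - q ^ (n+1) * (thF q t n (m-1) + thF q t n (m+1)) := by
  have hy : q ^ m ≠ 0 := zpow_ne_zero _ hq0
  have t1 : t (m-1) = - (q ^ m)⁻¹ * t m := by
    have := ht (m-1)
    rw [sub_add_cancel] at this
    rw [this]; field_simp
  have e1 : qRec q (n+1+m) = (1 - q^(n+2) * q^m) * qRec q (n+2+m) := by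
    have := qRec_pred hq (n+2+m)
    rw [show (n:ℤ)+2+m-1 = n+1+m by ring, zpow_add₀ hq0] at this
    rw [this]; norm_cast
  have e2 : qRec q (n+m) = (1 - q^(n+1) * q^m) * qRec q (n+1+m) := by
    have := qRec_pred hq (n+1+m)
    rw [show (n:ℤ)+1+m-1 = n+m by ring, zpow_add₀ hq0] at this
    rw [this]; norm_cast
  have e3 : qRec q (n-m) = (1 - q^(n+1) / q^m) * qRec q (n+1-m) := by
    have := qRec_pred hq (n+1-m)
    rw [show (n:ℤ)+1-m-1 = n-m by ring, zpow_sub₀ hq0] at this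
    rw [this]; norm_cast
  have e4 : qRec q (n-m-1) = (1 - q^n / q^m) * qRec q (n-m) := by
    have := qRec_pred hq (n-m)
    rw [zpow_sub₀ hq0] at this
    rw [this]; norm_cast
  have f1 : thF q t (n+1) m = t m * qRec q (n+2+m) * qRec q (n+1-m) := by
    unfold thF; push_cast; rw [show (n:ℤ)+1+1+m = n+2+m by ring]
  have f2 : thF q t n (m-1) = t (m-1) * qRec q (n+m) * qRec q (n+1-m) := by
    unfold thF; rw [show (n:ℤ)+1+(m-1) = n+m by ring, show (n:ℤ)-(m-1) = n+1-m by ring]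
  have f3 : thF q t n (m+1) = t (m+1) * qRec q (n+2+m) * qRec q (n-m-1) := by
    unfold thF; rw [show (n:ℤ)+1+(m+1) = n+2+m by ring, show (n:ℤ)-(m+1) = n-m-1 by ring]
  rw [f1, f2, f3, thF, t1, ht, e4, e3, e2, e1, zpow_add₀ hq0, zpow_one]
  generalize qRec q (n+2+m) = R
  generalize qRec q (n+1-m) = R'
  generalize q ^ m = y at *
  field_simp
  ring

section
variable {q : ℂ} {t : ℤ → ℂ}

lemma thF_le (C : ℝ) (hC0 : 0 ≤ C) (hC : ∀ m, ‖qRec q m‖ ≤ C) (n : ℕ) (m : ℤ) :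
    ‖((m:ℂ) + 1/2) * thF q t n m‖ ≤ C * C * ‖((m:ℂ) + 1/2) * t m‖ := by
  have h1 := hC (n+1+m)
  have h2 := hC (n-m)
  have h3 := mul_le_mul h1 h2 (norm_nonneg _) hC0
  calc _ = ‖qRec q (n+1+m)‖ * ‖qRec q (n-m)‖ * ‖((m:ℂ) + 1/2) * t m‖ := by
        rw [thF]; simp only [norm_mul]; ring
    _ ≤ _ := by gcongr

lemma thF_tsum_rec (hq : ‖q‖ < 1) (hq0 : q ≠ 0)
    (ht : ∀ m, t (m+1) = - q ^ (m+1) * t m) 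
    (hs : ∀ n, Summable fun m : ℤ => ((m:ℂ) + 1/2) * thF q t n m)
    (hs0 : ∀ n, Summable fun m : ℤ => thF q t n m) (n : ℕ) :
    (1 - q ^ (2*n+2)) * (1 - q ^ (2*n+3)) * ∑' m : ℤ, ((m:ℂ) + 1/2) * thF q t (n+1) m =
      (1 - q ^ (n+1))^2 * ∑' m : ℤ, ((m:ℂ) + 1/2) * thF q t n m := by
  have a0 := (hs n).hasSum
  have b0 := (hs0 n).hasSum
  set S := ∑' m : ℤ, ((m:ℂ) + 1/2) * thF q t n m
  set S0 := ∑' m : ℤ, thF q t n m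
  have a1 : HasSum (fun m : ℤ => ((m:ℂ) + 1/2) * thF q t n (m-1)) (S + S0) := by
    refine ((Equiv.subRight (1:ℤ)).hasSum_iff.mpr (a0.add b0)).congr_fun ?_ 
    intro m
    simp only [Function.comp, Equiv.subRight_apply]
    push_cast; ring
  have a2 : HasSum (fun m : ℤ => ((m:ℂ) + 1/2) * thF q t n (m+1)) (S - S0) := by
    refine ((Equiv.addRight (1:ℤ)).hasSum_iff.mpr (a0.sub b0)).congr_fun ?_ 
    intro m
    simp only [Function.comp, Equiv.coe_addRight]
    push_cast; ring
  have h := ((a0.mul_left (1 + q ^ (2*n+2))).sub ((a1.add a2).mul_left (q ^ (n+1))))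
  rw [← tsum_mul_left]
  have h' : (fun m : ℤ => (1 - q ^ (2*n+2)) * (1 - q ^ (2*n+3)) * (((m:ℂ) + 1/2) * thF q t (n+1) m))
      = fun m : ℤ => (1 + q ^ (2*n+2)) * (((m:ℂ) + 1/2) * thF q t n m) - q ^ (n+1) *
       (((m:ℂ) + 1/2) * thF q t n (m-1) + ((m:ℂ) + 1/2) * thF q t n (m+1)) := by
    funext m
    have := thF_rec hq hq0 t ht n m
    linear_combination ((m:ℂ) + 1/2) * this
  rw [h', h.tsum_eq]
  ring

lemma thF_tsum (hq : ‖q‖ < 1) (hq0 : q ≠ 0)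
    (ht : ∀ m, t (m+1) = - q ^ (m+1) * t m) 
    (hs : ∀ n, Summable fun m : ℤ => ((m:ℂ) + 1/2) * thF q t n m)
    (hs0 : ∀ n, Summable fun m : ℤ => thF q t n m) (n : ℕ) :
    qPoch q (2*n+1) * ∑' m : ℤ, ((m:ℂ) + 1/2) * thF q t n m = t 0 * qPoch q n ^ 2 := by
  induction n with
  | zero =>
    have h1 : ∑' m : ℤ, ((m:ℂ) + 1/2) * thF q t 0 m =
        ∑ m ∈ ({0, -1} : Finset ℤ), ((m:ℂ) + 1/2) * thF q t 0 m := by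
      refine tsum_eq_sum fun m hm => ?_
      simp only [Finset.mem_insert, Finset.mem_singleton, not_or] at hm
      have : m < -1 ∨ 0 < m := by omega
      rcases this with h | h
      · simp [thF, qRec, show ¬ (0 ≤ 1 + m) by omega]
      · simp [thF, qRec, show ¬ (m ≤ 0) by omega]
    have h2 := ht (-1)
    simp at h2
    have h3 := one_sub_pow_ne hq 0
    simp at h3
    rw [h1, Finset.sum_pair (by norm_num)]
    simp [thF, qRec, qPoch, h2]
    field_simp
    ring
  | succ n ih =>
    have h := thF_tsum_rec hq hq0 ht hs hs0 n
    rw [show 2*(n+1)+1 = 2*n+1+1+1 by ring, qPoch_succ, qPoch_succ, qPoch_succ q n]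
    rw [show 2*n+1+1 = 2*n+2 by ring, show 2*n+2+1 = 2*n+3 by ring]
    linear_combination qPoch q (2*n+1) * h + (1 - q^(n+1))^2 * ih

open Filter Topology in
lemma theta_deriv_ne (hq : ‖q‖ < 1) (hq0 : q ≠ 0)
    (ht : ∀ m, t (m+1) = - q ^ (m+1) * t m) (ht0 : t 0 ≠ 0)
    (hs : Summable fun m : ℤ => ‖((m:ℂ) + 1/2) * t m‖) 
    (hs0 : Summable fun m : ℤ => ‖t m‖) :
    ∑' m : ℤ, ((m:ℂ) + 1/2) * t m ≠ 0 := by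
  obtain ⟨P, hP, hPt⟩ := qPoch_tendsto hq
  obtain ⟨C, hC0, hC⟩ := qRec_bdd hP hPt
  have hS : ∀ n, Summable fun m : ℤ => ((m:ℂ) + 1/2) * thF q t n m := fun n =>
    Summable.of_norm_bounded (hs.mul_left (C*C)) (thF_le C hC0 hC n)
  have hS0 : ∀ n, Summable fun m : ℤ => thF q t n m := fun n =>
    Summable.of_norm_bounded (hs0.mul_left (C*C)) fun m => by
      have h3 := mul_le_mul (hC (n+1+m)) (hC (n-m)) (norm_nonneg _) hC0
      calc _ = ‖qRec q (n+1+m)‖ * ‖qRec q (n-m)‖ * ‖t m‖ := by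
            rw [thF]; simp only [norm_mul]; ring
        _ ≤ _ := by gcongr
  have key := thF_tsum hq hq0 ht hS hS0
  have lim : Tendsto (fun n : ℕ => ∑' m : ℤ, ((m:ℂ) + 1/2) * thF q t n m) atTop
      (𝓝 (∑' m : ℤ, ((m:ℂ) + 1/2) * (t m * P⁻¹ * P⁻¹))) := by
    refine tendsto_tsum_of_dominated_convergence (hs.mul_left (C*C)) (fun m => ?_)
      (Eventually.of_forall fun n m => thF_le C hC0 hC n m)
    refine Tendsto.const_mul _ ?_
    refine Tendsto.mul (Tendsto.const_mul _ ?_) ?_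
    · exact qRec_tendsto hP hPt _ (tendsto_atTop_add_const_right _ _
        (tendsto_atTop_add_const_right _ _ tendsto_natCast_atTop_atTop))
    · exact qRec_tendsto hP hPt _ (tendsto_atTop_add_const_right _ (-m)
        tendsto_natCast_atTop_atTop)
  have h2 : Tendsto (fun n : ℕ => qPoch q (2*n+1)) atTop (𝓝 P) :=
    hPt.comp (tendsto_atTop_mono (fun n => by simp only [id]; omega) tendsto_id)
  have e := tendsto_nhds_unique ((h2.mul lim).congr key) ((hPt.pow 2).const_mul (t 0))
  intro h0
  have : ∑' m : ℤ, ((m:ℂ) + 1/2) * (t m * P⁻¹ * P⁻¹) = 0 := by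
    have : (fun m : ℤ => ((m:ℂ) + 1/2) * (t m * P⁻¹ * P⁻¹)) =
        fun m : ℤ => (((m:ℂ) + 1/2) * t m) * (P⁻¹ * P⁻¹) := by funext m; ring
    rw [this, tsum_mul_right, h0, zero_mul]
  rw [this, mul_zero] at e
  exact mul_ne_zero ht0 (pow_ne_zero 2 hP) e.symm
end

lemma e_term_norm (m : ℤ) (σ : ℂ) :
    ‖e (((m : ℂ) + 1/2)^2 / 2 * σ + ((m : ℂ) + 1/2) / 2)‖ =
      Real.exp (-Real.pi * ((m:ℝ) + 1/2)^2 * σ.im) := by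
  have : 2 * (Real.pi : ℂ) * Complex.I * (((m : ℂ) + 1/2)^2 / 2 * σ + ((m : ℂ) + 1/2) / 2) =
      (((Real.pi * ((m:ℝ) + 1/2)^2 : ℝ) : ℂ) * σ + ((Real.pi * ((m:ℝ)+1/2) : ℝ) : ℂ)) * Complex.I := by
    push_cast; ring
  rw [e, this, Complex.norm_exp, Complex.mul_I_re, Complex.add_im, Complex.im_ofReal_mul,
    Complex.ofReal_im]
  congr 1; ring

lemma bound_summable (C : ℝ) {T : ℝ} (hT : 0 < T) :
    Summable fun m : ℤ => (|(m:ℝ)| + C) * Real.exp (-Real.pi * (T * (m:ℝ)^2 - 2 * (T/2) * |(m:ℝ)|)) := by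
  have h1 := summable_pow_mul_jacobiTheta₂_term_bound (T/2) hT 1
  have h0 := (summable_pow_mul_jacobiTheta₂_term_bound (T/2) hT 0).mul_left C
  refine (h1.add h0).congr fun m => ?_
  push_cast
  ring

lemma term_le (C : ℝ) (hC : 0 ≤ C) {T : ℝ} (hT : 0 < T) (a : ℂ) (m : ℤ) (ha : ‖a‖ ≤ |(m:ℝ)| + C)
    (σ : ℂ) (hσ : T < σ.im) :
    ‖a * e (((m : ℂ) + 1/2)^2 / 2 * σ + ((m : ℂ) + 1/2) / 2)‖ ≤
      (|(m:ℝ)| + C) * Real.exp (-Real.pi * (T * (m:ℝ)^2 - 2 * (T/2) * |(m:ℝ)|)) := by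
  rw [norm_mul, e_term_norm]
  refine mul_le_mul ha (Real.exp_le_exp.mpr ?_) (Real.exp_pos _).le (by positivity)
  have h1 : (m:ℝ)^2 - |(m:ℝ)| ≤ ((m:ℝ)+1/2)^2 := by nlinarith [neg_abs_le (m:ℝ)]
  have h2 : T * ((m:ℝ)^2 - |(m:ℝ)|) ≤ ((m:ℝ)+1/2)^2 * σ.im := by
    calc _ ≤ T * ((m:ℝ)+1/2)^2 := by gcongr
      _ ≤ σ.im * ((m:ℝ)+1/2)^2 := by gcongr
      _ = _ := by ring
  have := mul_le_mul_of_nonneg_left h2 Real.pi_pos.le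
  linarith

lemma diff_series (C : ℝ) (hC : 0 ≤ C) (a : ℤ → ℂ) (ha : ∀ m : ℤ, ‖a m‖ ≤ |(m:ℝ)| + C)
    (τ : ℂ) (hτ : 0 < τ.im) :
    DifferentiableAt ℂ (fun σ => ∑' m : ℤ,
      a m * e (((m : ℂ) + 1/2)^2 / 2 * σ + ((m : ℂ) + 1/2) / 2)) τ := by
  have hT : 0 < τ.im / 2 := by linarith
  have hU : IsOpen {σ : ℂ | τ.im / 2 < σ.im} := isOpen_lt continuous_const Complex.continuous_im
  have := Complex.differentiableOn_tsum_of_summable_norm (bound_summable C hT)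
    (F := fun (m:ℤ) σ => a m * e (((m : ℂ) + 1/2)^2 / 2 * σ + ((m : ℂ) + 1/2) / 2))
    (fun m => by unfold e; fun_prop) hU (fun m σ hσ => term_le C hC hT (a m) m (ha m) σ hσ)
  exact this.differentiableAt (hU.mem_nhds (by simpa using hτ))

lemma half_bound (m : ℤ) : ‖(m:ℂ) + 1/2‖ ≤ |(m:ℝ)| + 1 := by
  refine (norm_add_le _ _).trans ?_
  rw [Complex.norm_intCast]; norm_num

lemma eta3_ne (τ : ℂ) (hτ : 0 < τ.im) : eta3 τ ≠ 0 := by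
  unfold eta3
  refine mul_ne_zero (by simp) ?_
  have hT : 0 < τ.im / 2 := by linarith
  refine theta_deriv_ne (q := e τ) (t := fun m => e (((m : ℂ) + 1/2)^2 / 2 * τ + ((m : ℂ) + 1/2) / 2))
    ?_ (Complex.exp_ne_zero _) ?_ (Complex.exp_ne_zero _) ?_ ?_
  · rw [e, Complex.norm_exp, Real.exp_lt_one_iff]
    have : 2 * (Real.pi : ℂ) * Complex.I * τ = ((2 * Real.pi : ℝ) : ℂ) * (τ * Complex.I) := by
      push_cast; ring
    rw [this, Complex.re_ofReal_mul, Complex.mul_I_re]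
    nlinarith [mul_pos Real.pi_pos hτ]
  · intro m
    simp only [e]
    rw [← Complex.exp_int_mul, neg_mul, ← Complex.exp_add, ← neg_one_mul, ← Complex.exp_pi_mul_I,
      ← Complex.exp_add]
    congr 1
    push_cast; ring
  · exact Summable.of_nonneg_of_le (fun _ => norm_nonneg _)
      (fun m => term_le 1 zero_le_one hT _ m (half_bound m) τ (by linarith)) (bound_summable 1 hT)
  · refine Summable.of_nonneg_of_le (fun _ => norm_nonneg _)
      (fun m => ?_) (bound_summable 1 hT)
    have := term_le 1 zero_le_one hT 1 m (by simp) τ (by linarith)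
    simpa using this

lemma eta3_diff (τ : ℂ) (hτ : 0 < τ.im) : DifferentiableAt ℂ eta3 τ := by
  unfold eta3
  exact (diff_series 1 zero_le_one (fun m => (m:ℂ) + 1/2) half_bound τ hτ).const_mul _

lemma gplus_diff (x : ℝ) (τ : ℂ) (hτ : 0 < τ.im) : DifferentiableAt ℂ (fun σ => gplus σ x) τ := by
  unfold gplus
  refine DifferentiableAt.mul (DifferentiableAt.mul (by unfold e; fun_prop) ?_) ?_
  · refine DifferentiableAt.div (by fun_prop) ((eta3_diff τ hτ).const_mul _) ?_
    exact mul_ne_zero Complex.I_ne_zero (eta3_ne τ hτ)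
  · have := diff_series (1 + |x|) (by positivity)
      (fun m => if |x| < (m : ℝ) + 1/2 then (((m : ℝ) + 1/2 - |x| : ℝ) : ℂ) else 0) (fun m => by
        split_ifs with h
        · rw [Complex.norm_real, Real.norm_eq_abs, abs_of_pos (by linarith)]
          linarith [le_abs_self (m:ℝ), abs_nonneg x]
        · rw [norm_zero]; positivity) τ hτ
    simpa only [ite_mul, zero_mul] using this

lemma erfc_deriv (y : ℝ) : HasDerivAt erfc (-(2 / Real.sqrt Real.pi) * Real.exp (-y^2)) y := by
  have hi : Integrable (fun t : ℝ => Real.exp (-t^2)) := by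
    simpa using integrable_exp_neg_mul_sq (b := 1) one_pos
  have hc : Continuous (fun t : ℝ => Real.exp (-t^2)) := by fun_prop
  have h : erfc = fun y => (2 / Real.sqrt Real.pi) *
      ((∫ t in Set.Ioi (0:ℝ), Real.exp (-t^2)) - ∫ t in (0:ℝ)..y, Real.exp (-t^2)) := by
    funext y
    rw [erfc, ← intervalIntegral.integral_interval_add_Ioi (a := 0) (b := y) hi.integrableOn hi.integrableOn]
    ring
  rw [h]
  have := ((hc.integral_hasStrictDerivAt 0 y).hasDerivAt.const_sub
    (∫ t in Set.Ioi (0:ℝ), Real.exp (-t^2))).const_mul (2 / Real.sqrt Real.pi)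
  exact this.congr_deriv (by ring)

lemma erfc_comp_deriv (x v : ℝ) (hv : 0 < v) :
    HasDerivAt (fun v => erfc (Real.sqrt (2 * Real.pi * v) * |x|))
      (-(Real.sqrt (2 * v) / v * |x| * Real.exp (-(2 * Real.pi * v * x^2)))) v := by
  have hp : 0 < 2 * Real.pi * v := by positivity
  have h1 : HasDerivAt (fun v => Real.sqrt (2 * Real.pi * v) * |x|)
      ((2 * Real.pi) / (2 * Real.sqrt (2 * Real.pi * v)) * |x|) v := by
    have : HasDerivAt (fun v : ℝ => 2 * Real.pi * v) (2 * Real.pi) v := by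
      simpa using (hasDerivAt_id v).const_mul (2 * Real.pi)
    exact (this.sqrt hp.ne').mul_const _
  have h2 := (erfc_deriv (Real.sqrt (2 * Real.pi * v) * |x|)).comp v h1
  refine h2.congr_deriv ?_
  have e1 : Real.sqrt (2 * Real.pi * v) = Real.sqrt Real.pi * Real.sqrt (2 * v) := by
    rw [← Real.sqrt_mul Real.pi_pos.le]; congr 1; ring
  have e2 : (Real.sqrt (2 * Real.pi * v) * |x|)^2 = 2 * Real.pi * v * x^2 := by
    rw [mul_pow, Real.sq_sqrt hp.le, sq_abs]
  rw [e2, e1]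
  have s1 : Real.sqrt Real.pi ≠ 0 := by positivity
  have s2 : Real.sqrt (2*v) ≠ 0 := by positivity
  have q1 : Real.sqrt Real.pi ^ 2 = Real.pi := Real.sq_sqrt Real.pi_pos.le
  have q2 : Real.sqrt (2*v) ^ 2 = 2*v := Real.sq_sqrt (by positivity)
  field_simp
  rw [q1, q2]
  try ring

/-- `ξ₁ g_τ(x) = (√(2v)/2)·x·e(x²τ/2)`. -/
theorem xi_gfun (x : ℝ) (τ : ℂ) (hτ : 0 < τ.im) :
    xi 1 (fun σ => gfun σ x) τ =
      ((Real.sqrt (2 * τ.im) / 2 : ℝ) : ℂ) * (x : ℂ) * e ((x : ℂ)^2 * τ / 2) := by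
  set D : ℝ := -(Real.sqrt (2 * τ.im) / τ.im * |x| * Real.exp (-(2 * Real.pi * τ.im * x^2))) with hD
  have hg := (gplus_diff x τ hτ).hasFDerivAt.restrictScalars ℝ
  have hh : DifferentiableAt ℂ (fun σ : ℂ => e (-(x : ℂ)^2 * σ / 2) * ((Real.sign x : ℂ) / 2)) τ := by
    unfold e; fun_prop
  have hh' := hh.hasFDerivAt.restrictScalars ℝ
  have hE : HasFDerivAt (fun σ : ℂ => (erfc (Real.sqrt (2 * Real.pi * σ.im) * |x|) : ℂ))
      (Complex.ofRealCLM.comp (D • Complex.imCLM)) τ := by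
    have h1 := (erfc_comp_deriv x τ.im hτ).comp_hasFDerivAt τ Complex.imCLM.hasFDerivAt
    exact Complex.ofRealCLM.hasFDerivAt.comp τ h1
  have hF : HasFDerivAt (fun σ => gfun σ x) _ τ := hg.sub (hh'.mul hE)
  unfold xi
  rw [hF.fderiv]
  have hl : ∀ L : ℂ →L[ℂ] ℂ, L Complex.I = Complex.I * L 1 := fun L => by
    have := L.map_smul Complex.I 1
    simpa using this
  simp only [_root_.sub_apply, _root_.add_apply,
    _root_.smul_apply, ContinuousLinearMap.coe_restrictScalars', hl,
    ContinuousLinearMap.comp_apply, Complex.imCLM_apply, Complex.ofRealCLM_apply, smul_eq_mul,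
    Complex.one_im, Complex.I_im, mul_zero, mul_one, Complex.ofReal_zero, Real.rpow_one]
  generalize (fderiv ℂ (fun σ => gplus σ x) τ) 1 = A
  generalize (fderiv ℂ (fun σ : ℂ => e (-(x : ℂ)^2 * σ / 2) * ((Real.sign x : ℂ) / 2)) τ) 1 = B
  generalize erfc (Real.sqrt (2 * Real.pi * τ.im) * |x|) = E
  have e1 : (1/2 : ℂ) * (A - (0 + (E:ℂ) * B) + Complex.I * (Complex.I * A -
      (e (-(x : ℂ)^2 * τ / 2) * ((Real.sign x : ℂ) / 2) * (D:ℂ) + (E:ℂ) * (Complex.I * B)))) =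
      -(1/4 : ℂ) * Complex.I * ((Real.sign x * D : ℝ) : ℂ) * e (-(x : ℂ)^2 * τ / 2) := by
    push_cast
    linear_combination (A/2 - E*B/2) * Complex.I_mul_I
  rw [e1]
  have e2 : Real.sign x * D = -(Real.sqrt (2 * τ.im) / τ.im * x * Real.exp (-(2 * Real.pi * τ.im * x^2))) := by
    have : Real.sign x * |x| = x := by
      rcases lt_trichotomy x 0 with h | h | h
      · rw [Real.sign_of_neg h, abs_of_neg h]; ring
      · simp [h]
      · rw [Real.sign_of_pos h, abs_of_pos h]; ring
    rw [hD]; linear_combination -(Real.sqrt (2 * τ.im) / τ.im * Real.exp (-(2 * Real.pi * τ.im * x^2))) * this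
  have e3 : (starRingEnd ℂ) (e (-(x : ℂ)^2 * τ / 2)) * (Real.exp (-(2 * Real.pi * τ.im * x^2)) : ℂ)
      = e ((x:ℂ)^2 * τ / 2) := by
    rw [e, e, ← Complex.exp_conj, Complex.ofReal_exp, ← Complex.exp_add]
    congr 1
    simp only [map_mul, map_div₀, map_neg, map_pow, Complex.conj_ofReal, Complex.conj_I, map_ofNat]
    have c1 : (starRingEnd ℂ) τ = τ - 2 * τ.im * Complex.I := by
      apply Complex.ext <;> simp <;> ring
    rw [c1]
    push_cast
    linear_combination (-2 * Real.pi * (x:ℂ)^2 * τ.im) * Complex.I_sq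
  rw [e2]
  simp only [map_mul, map_neg, map_div₀, map_one, Complex.conj_I, Complex.conj_ofReal, map_ofNat]
  rw [← e3]
  have hv : (τ.im : ℂ) ≠ 0 := by exact_mod_cast hτ.ne'
  push_cast
  field_simp
  simp only [Complex.I_sq]
  ring
end
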